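/- arXiv:1110.3490 — 3 statements merged into one kernel-verified Lean document; each statement's English description precedes it below -/
import Mathlib

section
/- Let n be an even positive integer and let d be an integer with 1 ≤ d < n/2. Define h(n,d) := C(n−d−1, 2) + d(d+1). Then: (i) every graph G on n vertices with minimum degree δ(G) ≥ d and more than max{h(n,d), h(n, n/2−1)} edges contains a perfect matching; and (ii) there exists a graph on n vertices with minimum degree at least d and exactly max{h(n,d), h(n, n/2−1)} edges that contains no perfect matching. Equivalently, the maximum number of edges of an n-vertex graph with minimum degree at least d having no perfect matching equals max{h(n,d), h(n, n/2−1)}. -/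
/-- The number of edges of a graph. -/
noncomputable def edgeCount {V : Type*} (G : SimpleGraph V) : ℕ := Nat.card G.edgeSet

/-- The degree of a vertex. -/
noncomputable def deg {V : Type*} (G : SimpleGraph V) (v : V) : ℕ := Nat.card (G.neighborSet v)

/-- `h(n,d) = C(n-d-1,2) + d(d+1)`. -/
def hFun (n d : ℕ) : ℕ := Nat.choose (n - d - 1) 2 + d * (d + 1)

/-!
Fix a maximal matching-free graph `H ⊇ G`. If `u`, `v` are non-adjacent, a perfect matching of
`H + uv` uses `uv`, and exchanging `uv`, `xy` for `ux`, `vy` shows that no partner `y` of a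
neighbour `x` of `u` is adjacent to `v`; hence `deg u + deg v ≤ n - 2`. Choose `v` of maximal degree
among the non-universal vertices and `u` of maximal degree among the non-neighbours of `v`. With
`t := deg u ≤ n / 2 - 1`, the vertex `v` has at least `t + 1` non-neighbours, each of degree at most
`t`, and so `H` has at most `h(n, t)` edges. Convexity of `h(n, ·)` moves `t` to an endpoint of
`[d, n / 2 - 1]`. Both endpoints are attained by a clique on `n - t - 1` vertices together with
`t + 1` independent vertices, each joined to the same `t` vertices of the clique.
-/

open Finset SimpleGraph

section MatchingInvolution

variable {V : Type*} {G : SimpleGraph V} {f : V → V} {u v x : V}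

/-- `f` sends every vertex to its partner in a perfect matching of `G`. Perfect matchings are
handled through these involutions, since exchanging edges then amounts to conjugation. -/
def IsMatchingInvolution (G : SimpleGraph V) (f : V → V) : Prop :=
  f.Involutive ∧ ∀ x, G.Adj x (f x)

theorem exists_isPerfectMatching_iff_exists_isMatchingInvolution :
    (∃ M : G.Subgraph, M.IsPerfectMatching) ↔ ∃ f, IsMatchingInvolution G f := by
  constructor
  · rintro ⟨M, hM⟩
    choose f hf hunique using Subgraph.isPerfectMatching_iff.1 hM
    exact ⟨f, fun x => (hunique (f x) x (hf x).symm).symm, fun x => (hf x).adj_sub⟩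
  · rintro ⟨f, hinv, hadj⟩
    let M : G.Subgraph :=
      { verts := Set.univ
        Adj := fun a b => f a = b
        adj_sub := by rintro a _ rfl; exact hadj a
        edge_vert := fun _ => Set.mem_univ _
        symm := Function.symm_apply_eq_iff.2 hinv }
    exact ⟨M, Subgraph.isPerfectMatching_iff.2 fun a => ⟨f a, rfl, fun _ h => Eq.symm h⟩⟩

theorem isMatchingFree_iff_forall_not_isMatchingInvolution :
    G.IsMatchingFree ↔ ∀ f, ¬ IsMatchingInvolution G f := by
  rw [IsMatchingFree, ← not_exists, ← not_exists,
    exists_isPerfectMatching_iff_exists_isMatchingInvolution]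

namespace IsMatchingInvolution

theorem card_le_of_forall_adj_mem {S T : Finset V} (hf : IsMatchingInvolution G f)
    (hST : ∀ a ∈ T, ∀ b, G.Adj a b → b ∈ S) : #T ≤ #S :=
  card_le_card_of_injOn f (fun a ha => hST a ha _ (hf.2 a)) hf.1.injective.injOn

theorem adj_of_sup_edge (hf : IsMatchingInvolution (G ⊔ edge u v) f) {a : V} (hu : a ≠ u)
    (hv : a ≠ v) : G.Adj a (f a) := by
  simpa [edge_adj, hu, hv] using hf.2 a

theorem of_sup_edge (hf : IsMatchingInvolution (G ⊔ edge u v) f) (huv : f u ≠ v) :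
    IsMatchingInvolution G f := by
  have hvu : f v ≠ u := fun h => huv (h ▸ hf.1 v)
  refine ⟨hf.1, fun a => ?_⟩
  have hadj := hf.2 a
  grind

variable [DecidableEq V]

/-- Conjugating by the transposition `(v x)` trades the matching edges `{u, v}`, `{x, f x}` for
`{u, x}`, `{v, f x}`. -/
theorem exchange (hf : IsMatchingInvolution (G ⊔ edge u v) f) (hfu : f u = v)
    (hux : G.Adj u x) (hvx : G.Adj v (f x)) :
    IsMatchingInvolution G fun a => Equiv.swap v x (f (Equiv.swap v x a)) := by
  refine ⟨fun a => by simp [hf.1 _], fun a => ?_⟩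
  have hinv := hf.1
  have hfv : f v = u := hfu ▸ hinv u
  have hadj := hf.adj_of_sup_edge (a := a)
  have hne : u ≠ v := hfu ▸ (hf.2 u).ne
  have hxfx : x ≠ f x := (hf.2 x).ne
  grind [SimpleGraph.adj_comm, Function.Involutive, SimpleGraph.Adj.ne]

end IsMatchingInvolution

variable [Fintype V] [DecidableRel G.Adj]

theorem degree_add_degree_add_two_le_of_isMatchingInvolution_sup_edge (hG : G.IsMatchingFree)
    (huv : Gᶜ.Adj u v) (hf : IsMatchingInvolution (G ⊔ edge u v) f) :
    G.degree u + G.degree v + 2 ≤ Fintype.card V := by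
  classical
  rw [isMatchingFree_iff_forall_not_isMatchingInvolution] at hG
  rw [compl_adj] at huv
  have hfu : f u = v := by
    by_contra h
    exact hG f (hf.of_sup_edge h)
  have hpartner : ∀ x, G.Adj u x → ¬ G.Adj v (f x) := fun x hux hvx =>
    hG _ (hf.exchange hfu hux hvx)
  have hdisj : Disjoint ((insert u (G.neighborFinset u)).image f)
      (insert u (G.neighborFinset v)) := by
    have hinv := hf.1
    rw [Finset.disjoint_left]
    grind [mem_neighborFinset, Function.Involutive, SimpleGraph.Adj.ne]
  calc G.degree u + G.degree v + 2
      = #((insert u (G.neighborFinset u)).image f) + #(insert u (G.neighborFinset v)) := by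
        rw [card_image_of_injective _ hf.1.injective, card_insert_of_notMem (by simp),
          card_insert_of_notMem (by simpa [adj_comm] using huv.2), card_neighborFinset_eq_degree,
          card_neighborFinset_eq_degree]
        ring
    _ ≤ Fintype.card V := by
        rw [← card_union_of_disjoint hdisj]
        exact card_le_univ _

theorem degree_add_degree_add_two_le_of_maximal_isMatchingFree
    (hG : Maximal IsMatchingFree G) (huv : Gᶜ.Adj u v) :
    G.degree u + G.degree v + 2 ≤ Fintype.card V := by
  have hlt : G < G ⊔ edge u v := G.lt_sup_edge _ _ huv.1 huv.2
  have hnot := hG.not_prop_of_gt hlt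
  rw [isMatchingFree_iff_forall_not_isMatchingInvolution] at hnot
  push Not at hnot
  obtain ⟨f, hf⟩ := hnot
  exact degree_add_degree_add_two_le_of_isMatchingInvolution_sup_edge hG.prop huv hf

end MatchingInvolution

theorem not_isMatchingFree_top {V : Type*} [Finite V] (hV : Even (Nat.card V)) :
    ¬ (⊤ : SimpleGraph V).IsMatchingFree := by
  have hclique : (⊤ : SimpleGraph V).IsClique Set.univ := fun _ _ _ _ h => h
  obtain ⟨M, hverts, hM⟩ := (hclique.even_iff_exists_isMatching Set.finite_univ).1
    (by rwa [Set.ncard_univ])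
  exact fun hfree => hfree M ⟨hM, Subgraph.isSpanning_iff.2 hverts⟩

section EdgeCounting

variable {V : Type*} [Fintype V] [DecidableEq V] (G : SimpleGraph V) [DecidableRel G.Adj]
  (T : Finset V)

theorem card_edgeFinset_eq_card_induce_compl_add_card_biUnion_incidenceFinset :
    #G.edgeFinset =
      #(G.induce (Tᶜ : Finset V)).edgeFinset + #(T.biUnion fun x => G.incidenceFinset x) := by
  have hmeet : {e ∈ G.edgeFinset | ¬ e.toFinset ⊆ Tᶜ} = T.biUnion fun x => G.incidenceFinset x := by
    ext e
    simp only [mem_filter, mem_edgeFinset, mem_biUnion, mem_incidenceFinset, incidenceSet,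
      Set.mem_sep_iff, not_subset, Sym2.mem_toFinset, mem_compl, not_not]
    tauto
  rw [← card_filter_add_card_filter_not (fun e : Sym2 V => e.toFinset ⊆ Tᶜ), hmeet,
    card_filter_edgeFinset_toFinset_subset]

theorem card_edgeFinset_le_choose_add_sum_degree :
    #G.edgeFinset ≤ (#Tᶜ).choose 2 + ∑ x ∈ T, G.degree x := by
  rw [card_edgeFinset_eq_card_induce_compl_add_card_biUnion_incidenceFinset G T]
  gcongr
  · simpa only [coe_sort_coe, Fintype.card_coe] using
      (G.induce (Tᶜ : Finset V)).card_edgeFinset_le_card_choose_two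
  · simpa using card_biUnion_le (s := T) (t := fun x => G.incidenceFinset x)

variable {G T}

theorem card_edgeFinset_eq_choose_add_sum_degree (hclique : G.IsClique (T : Set V)ᶜ)
    (hindep : G.IsIndepSet T) :
    #G.edgeFinset = (#Tᶜ).choose 2 + ∑ x ∈ T, G.degree x := by
  have hdisj : (T : Set V).PairwiseDisjoint fun x => G.incidenceFinset x := by
    intro a ha b hb hab
    rw [Function.onFun, ← disjoint_coe, coe_incidenceFinset, coe_incidenceFinset,
      Set.disjoint_iff_inter_eq_empty]
    exact G.incidenceSet_inter_incidenceSet_of_not_adj (hindep ha hb hab) hab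
  have htop : G.induce (Tᶜ : Finset V) = ⊤ := induce_eq_top.2 (by rwa [coe_compl])
  rw [card_edgeFinset_eq_card_induce_compl_add_card_biUnion_incidenceFinset G T,
    card_biUnion hdisj]
  congr 1
  · rw [← Fintype.card_coe Tᶜ, ← card_edgeFinset_top_eq_card_choose_two]
    congr!
  · simp

end EdgeCounting

section LowDegreeVertices

variable {V : Type*} [Fintype V] {G : SimpleGraph V} [DecidableRel G.Adj]

theorem card_edgeFinset_le_hFun {T : Finset V} {t : ℕ} (hT : #T = t + 1)
    (hdeg : ∀ x ∈ T, G.degree x ≤ t) :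
    #G.edgeFinset ≤ hFun (Fintype.card V) t := by
  classical
  calc #G.edgeFinset ≤ (#Tᶜ).choose 2 + ∑ x ∈ T, G.degree x :=
        card_edgeFinset_le_choose_add_sum_degree G T
    _ ≤ (#Tᶜ).choose 2 + #T * t := by gcongr; exact sum_le_card_nsmul T _ t hdeg
    _ = hFun (Fintype.card V) t := by rw [hFun, card_compl, hT, Nat.sub_sub, mul_comm t]

theorem exists_card_eq_degree_add_one_forall_degree_le (hG : G ≠ ⊤)
    (hsum : ∀ u v, Gᶜ.Adj u v → G.degree u + G.degree v + 2 ≤ Fintype.card V) :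
    ∃ u, 2 * G.degree u + 2 ≤ Fintype.card V ∧
      ∃ T : Finset V, #T = G.degree u + 1 ∧ ∀ x ∈ T, G.degree x ≤ G.degree u := by
  classical
  obtain ⟨a, b, hab⟩ : ∃ a b, Gᶜ.Adj a b := ne_bot_iff_exists_adj.1 (mt compl_eq_bot.1 hG)
  obtain ⟨v, hv, hvmax⟩ := exists_max_image {v | (Gᶜ.neighborFinset v).Nonempty} (G.degree ·)
    ⟨a, (mem_filter_univ a).2 ⟨b, (mem_neighborFinset _ _ _).2 hab⟩⟩
  rw [mem_filter_univ] at hv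
  obtain ⟨u, hu, humax⟩ := exists_max_image (Gᶜ.neighborFinset v) (G.degree ·) hv
  rw [mem_neighborFinset] at hu
  have huv : G.degree u ≤ G.degree v :=
    hvmax u ((mem_filter_univ u).2 ⟨v, (mem_neighborFinset _ _ _).2 hu.symm⟩)
  have hle := hsum v u hu
  have hcard : G.degree u + 1 ≤ #(Gᶜ.neighborFinset v) := by
    rw [card_neighborFinset_eq_degree, degree_compl]
    omega
  obtain ⟨T, hTsub, hT⟩ := exists_subset_card_eq hcard
  exact ⟨u, by omega, T, hT, fun x hx => humax x (hTsub hx)⟩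

end LowDegreeVertices

section Convexity

theorem cast_hFun {n t : ℕ} (ht : t < n) :
    (hFun n t : ℝ) = (n - t - 1) * (n - t - 2) / 2 + t * (t + 1) := by
  obtain ⟨k, rfl⟩ := Nat.exists_eq_add_of_lt ht
  rw [hFun, show t + k + 1 - t - 1 = k by omega]
  push_cast [Nat.cast_choose_two]
  ring

theorem convexOn_hFun_polynomial (n : ℝ) :
    ConvexOn ℝ Set.univ fun x : ℝ => (n - x - 1) * (n - x - 2) / 2 + x * (x + 1) := by
  refine ⟨convex_univ, fun x _ y _ a b ha hb hab => ?_⟩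
  obtain rfl : b = 1 - a := by linarith
  simp only [smul_eq_mul]
  nlinarith [mul_nonneg (mul_nonneg ha hb) (sq_nonneg (x - y))]

theorem hFun_le_max {n a b t : ℕ} (hat : a ≤ t) (htb : t ≤ b) (hbn : b < n) :
    hFun n t ≤ max (hFun n a) (hFun n b) := by
  have hmax := (convexOn_hFun_polynomial n).le_max_of_mem_Icc (Set.mem_univ (a : ℝ))
    (Set.mem_univ (b : ℝ)) (z := (t : ℝ)) ⟨by exact_mod_cast hat, by exact_mod_cast htb⟩
  rw [← cast_hFun (by omega), ← cast_hFun (by omega), ← cast_hFun hbn] at hmax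
  exact_mod_cast hmax

end Convexity

section UpperBound

variable {V : Type*} [Fintype V] {G : SimpleGraph V} [DecidableRel G.Adj] {d : ℕ}

theorem card_edgeFinset_le_max_hFun_of_maximal (hV : Even (Fintype.card V))
    (hG : Maximal IsMatchingFree G) (hdeg : ∀ v, d ≤ G.degree v) :
    #G.edgeFinset ≤
      max (hFun (Fintype.card V) d) (hFun (Fintype.card V) (Fintype.card V / 2 - 1)) := by
  have htop : G ≠ ⊤ := by
    rintro rfl
    exact not_isMatchingFree_top (by rwa [Nat.card_eq_fintype_card]) hG.prop
  obtain ⟨u, hu, T, hT, hTdeg⟩ := exists_card_eq_degree_add_one_forall_degree_le htop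
    fun u v => degree_add_degree_add_two_le_of_maximal_isMatchingFree hG
  exact (card_edgeFinset_le_hFun hT hTdeg).trans
    (hFun_le_max (hdeg u) (by omega) (by omega))

theorem card_edgeFinset_le_max_hFun_of_isMatchingFree (hV : Even (Fintype.card V))
    (hG : G.IsMatchingFree) (hdeg : ∀ v, d ≤ G.degree v) :
    #G.edgeFinset ≤
      max (hFun (Fintype.card V) d) (hFun (Fintype.card V) (Fintype.card V / 2 - 1)) := by
  classical
  obtain ⟨H, hGH, hH⟩ := Finite.exists_le_maximal hG
  exact (card_le_card (edgeFinset_mono hGH)).trans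
    (card_edgeFinset_le_max_hFun_of_maximal hV hH fun v => (hdeg v).trans (degree_le_of_le hGH))

end UpperBound

section ExtremalGraph

variable {V : Type*} {S T : Finset V}

/-- For disjoint `S` and `T`, the join of the complete graph on `S` with the disjoint union of the
edgeless graph on `T` and the complete graph on the remaining vertices. With `#S = t` and
`#T = t + 1` it is the matching-free graph with `h(n, t)` edges. -/
def extremalGraph (S T : Finset V) : SimpleGraph V where
  Adj a b := a ≠ b ∧ (a ∈ T → b ∈ S) ∧ (b ∈ T → a ∈ S)
  symm := ⟨fun _ _ h => ⟨h.1.symm, h.2.2, h.2.1⟩⟩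
  loopless := ⟨fun _ h => h.1 rfl⟩

theorem isMatchingFree_extremalGraph (hcard : #S < #T) : (extremalGraph S T).IsMatchingFree :=
  isMatchingFree_iff_forall_not_isMatchingInvolution.2 fun _ hf =>
    hcard.not_ge (hf.card_le_of_forall_adj_mem fun _ ha _ hab => hab.2.1 ha)

theorem isIndepSet_extremalGraph (hST : Disjoint S T) : (extremalGraph S T).IsIndepSet T :=
  fun _ ha _ hb _ hab => Finset.disjoint_left.1 hST (hab.2.1 ha) hb

theorem isClique_compl_extremalGraph : (extremalGraph S T).IsClique (T : Set V)ᶜ :=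
  fun _ ha _ hb hab => ⟨hab, fun h => absurd h ha, fun h => absurd h hb⟩

variable [Fintype V] [DecidableRel (extremalGraph S T).Adj]

theorem neighborFinset_extremalGraph_of_mem (hST : Disjoint S T) {v : V} (hv : v ∈ T) :
    (extremalGraph S T).neighborFinset v = S := by
  ext a
  rw [mem_neighborFinset]
  refine ⟨fun h => h.2.1 hv, fun ha => ⟨?_, fun _ => ha, fun haT => ?_⟩⟩
  · exact (disjoint_iff_ne.1 hST a ha v hv).symm
  · exact absurd haT (Finset.disjoint_left.1 hST ha)

theorem card_le_degree_extremalGraph (hST : Disjoint S T) (hS : #S < Fintype.card V) (v : V) :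
    #S ≤ (extremalGraph S T).degree v := by
  classical
  rw [← card_neighborFinset_eq_degree]
  by_cases hv : v ∈ S
  · have huniversal : univ.erase v ⊆ (extremalGraph S T).neighborFinset v := fun a ha =>
      (mem_neighborFinset _ _ _).2
        ⟨(ne_of_mem_erase ha).symm, fun h => absurd h (Finset.disjoint_left.1 hST hv), fun _ => hv⟩
    have := card_le_card huniversal
    rw [card_erase_of_mem (mem_univ v), card_univ] at this
    omega
  · refine card_le_card fun a ha => (mem_neighborFinset _ _ _).2 ⟨?_, fun _ => ha, fun h => ?_⟩
    · rintro rfl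
      exact hv ha
    · exact absurd h (Finset.disjoint_left.1 hST ha)

theorem card_edgeFinset_extremalGraph (hST : Disjoint S T) (hcard : #T = #S + 1) :
    #(extremalGraph S T).edgeFinset = hFun (Fintype.card V) #S := by
  classical
  have hdeg : ∀ v ∈ T, (extremalGraph S T).degree v = #S := fun v hv => by
    rw [← card_neighborFinset_eq_degree, neighborFinset_extremalGraph_of_mem hST hv]
  rw [card_edgeFinset_eq_choose_add_sum_degree isClique_compl_extremalGraph
    (isIndepSet_extremalGraph hST), sum_congr rfl hdeg, sum_const, smul_eq_mul, card_compl, hcard,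
    hFun, Nat.sub_sub, mul_comm #S]

end ExtremalGraph

section Extremality

theorem deg_eq_degree {V : Type*} (G : SimpleGraph V) (v : V) [Fintype (G.neighborSet v)] :
    deg G v = G.degree v := by
  rw [deg, Nat.card_eq_fintype_card, card_neighborSet_eq_degree]

theorem edgeCount_eq_card_edgeFinset {V : Type*} (G : SimpleGraph V) [Fintype G.edgeSet] :
    edgeCount G = #G.edgeFinset := by
  rw [edgeCount, Nat.card_eq_fintype_card, edgeFinset_card]

theorem exists_isMatchingFree_edgeCount_eq_hFun {V : Type*} [Fintype V] {t : ℕ}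
    (ht : 2 * t < Fintype.card V) :
    ∃ G : SimpleGraph V, (∀ v, t ≤ deg G v) ∧ edgeCount G = hFun (Fintype.card V) t ∧
      G.IsMatchingFree := by
  classical
  obtain ⟨S, -, rfl⟩ := exists_subset_card_eq (s := (univ : Finset V)) (n := t)
    (by rw [card_univ]; omega)
  obtain ⟨T, hTS, hT⟩ := exists_subset_card_eq (s := Sᶜ) (n := #S + 1)
    (by rw [card_compl]; omega)
  have hST : Disjoint S T := Finset.disjoint_left.2 fun a ha haT => mem_compl.1 (hTS haT) ha
  refine ⟨extremalGraph S T, fun v => ?_, ?_, isMatchingFree_extremalGraph (by omega)⟩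
  · rw [deg_eq_degree]
    exact card_le_degree_extremalGraph hST (by omega) v
  · rw [edgeCount_eq_card_edgeFinset]
    exact card_edgeFinset_extremalGraph hST hT

theorem edgeCount_le_max_hFun {V : Type*} [Fintype V] {G : SimpleGraph V} {d : ℕ}
    (hV : Even (Fintype.card V)) (hG : G.IsMatchingFree) (hdeg : ∀ v, d ≤ deg G v) :
    edgeCount G ≤
      max (hFun (Fintype.card V) d) (hFun (Fintype.card V) (Fintype.card V / 2 - 1)) := by
  classical
  simp only [deg_eq_degree] at hdeg
  rw [edgeCount_eq_card_edgeFinset]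
  exact card_edgeFinset_le_max_hFun_of_isMatchingFree hV hG hdeg

end Extremality

/-- For an even positive `n` and `1 ≤ d < n/2`, the maximum number of edges of an `n`-vertex
graph with minimum degree at least `d` having no perfect matching equals
`max {h(n,d), h(n, n/2 - 1)}`: every graph with more edges (and min degree ≥ d) has a perfect
matching, and there is a graph attaining this number of edges with no perfect matching. -/
theorem stmt0 (n d : ℕ) (hn : 0 < n) (hneven : Even n) (hd1 : 1 ≤ d) (hd2 : 2 * d < n) :
    (∀ G : SimpleGraph (Fin n), (∀ v, d ≤ deg G v) →
      max (hFun n d) (hFun n (n / 2 - 1)) < edgeCount G →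
      ∃ M : G.Subgraph, M.IsPerfectMatching) ∧
    (∃ G : SimpleGraph (Fin n), (∀ v, d ≤ deg G v) ∧
      edgeCount G = max (hFun n d) (hFun n (n / 2 - 1)) ∧
      ¬ ∃ M : G.Subgraph, M.IsPerfectMatching) := by
  constructor
  · intro G hdeg hlt
    by_contra hno
    have hle := edgeCount_le_max_hFun (by simpa using hneven) (not_exists.1 hno) hdeg
    rw [Fintype.card_fin] at hle
    exact hlt.not_ge hle
  · obtain ⟨t, hdt, htn, hmax⟩ : ∃ t, d ≤ t ∧ 2 * t < n ∧
        hFun n t = max (hFun n d) (hFun n (n / 2 - 1)) := by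
      rcases max_choice (hFun n d) (hFun n (n / 2 - 1)) with h | h
      · exact ⟨d, le_rfl, hd2, h.symm⟩
      · exact ⟨n / 2 - 1, by grind, by omega, h.symm⟩
    obtain ⟨G, hdeg, hedges, hfree⟩ := exists_isMatchingFree_edgeCount_eq_hFun (V := Fin n)
      (by simpa using htn)
    rw [Fintype.card_fin] at hedges
    exact ⟨G, fun v => hdt.trans (hdeg v), hedges.trans hmax, not_exists.2 hfree⟩
end

section
/- Let n, r ∈ ℕ with r ≥ 2 and r dividing n. Suppose G is a graph on n vertices with degree sequence d_1 ≤ ⋯ ≤ d_n such that d_i ≥ (r−2)n/r + i for all i < n/r, and d_{n/r+1} ≥ (r−1)n/r. Suppose further that no vertex x of G with degree less than (r−1)n/r lies in a copy of K_{r+1}. Then G contains a perfect K_r-packing. -/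
/-- A perfect `K_r`-packing: a collection of vertex-disjoint `r`-cliques covering all vertices. -/
def HasPerfectKrPacking {n : ℕ} (G : SimpleGraph (Fin n)) (r : ℕ) : Prop :=
  ∃ P : Finset (Finset (Fin n)),
    (∀ p ∈ P, p.card = r ∧ G.IsClique (p : Set (Fin n))) ∧
    (P : Set (Finset (Fin n))).PairwiseDisjoint id ∧
    P.biUnion id = Finset.univ

/-!
If every degree is at least `(r - 1)n/r`, the complement has maximum degree less than `n/r`, so by
the Hajnal–Szemerédi theorem it has an equitable colouring with `n/r` colours, whose classes are
`r`-cliques of `G`. Otherwise a vertex `x` of minimum degree lies in an `r`-clique `T`: its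
neighbours outnumber what `r - 2` vertices of large degree can miss, so a greedy choice succeeds.
As `x` has small degree, no further vertex is adjacent to all of `T`; hence deleting `T` lowers
every degree by at most `r - 1`, the degree condition survives, and induction applies.

The Hajnal–Szemerédi theorem is proved by the argument of Kierstead and Kostochka. In a colouring
with one class too small and one too large, call a colour accessible if vertices can be shifted
along a path of classes from it to the small class. If the large class is not accessible, double
counting finds either an accessible vertex that can be exchanged with an inaccessible one, after
which both parts are balanced separately, or two nonadjacent inaccessible vertices with a common
solo neighbour, which make the set of accessible colours grow.
-/

open Finset Function Relation

section Reachability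

variable {α : Type*} {r : α → α → Prop} {S : Set α} {a b c u root : α}

/-- `ReachesWithin r S a b` says that `b` can be reached from `a` by `r`-steps between elements of
`S`. The empty walk is always allowed, so `ReachesWithin r S a a` holds even for `a ∉ S`. -/
def ReachesWithin (r : α → α → Prop) (S : Set α) : α → α → Prop :=
  ReflTransGen fun a b => r a b ∧ a ∈ S ∧ b ∈ S

theorem ReachesWithin.reflTransGen (h : ReachesWithin r S a b) : ReflTransGen r a b :=
  ReflTransGen.mono (fun _ _ h => h.1) _ _ h

theorem reachesWithin_univ (h : ReflTransGen r a b) : ReachesWithin r Set.univ a b :=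
  ReflTransGen.mono (fun _ _ h => ⟨h, trivial, trivial⟩) _ _ h

theorem ReachesWithin.inter_reflTransGen (h : ReachesWithin r S a root) :
    ReachesWithin r {c | ReflTransGen r c root ∧ c ∈ S} a root := by
  induction h using ReflTransGen.head_induction_on with
  | refl => exact .refl
  | head hstep hrest ih =>
    have hc := ReachesWithin.reflTransGen hrest
    exact .head ⟨hstep.1, ⟨.head hstep.1 hc, hstep.2.1⟩, hc, hstep.2.2⟩ ih

/-- Cut the walk at its last visit to its starting point. -/
theorem ReachesWithin.exists_step_avoiding_start (h : ReachesWithin r S a b) (hab : a ≠ b) :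
    a ∈ S ∧ ∃ c, r a c ∧ c ≠ a ∧ c ∈ S ∧ ReachesWithin r (S \ {a}) c b := by
  have hlast : ∀ x, ReachesWithin r S x b → (x ≠ a ∧ ReachesWithin r (S \ {a}) x b) ∨
      a ∈ S ∧ ∃ c, r a c ∧ c ≠ a ∧ c ∈ S ∧ ReachesWithin r (S \ {a}) c b := by
    intro x hx
    induction hx using ReflTransGen.head_induction_on with
    | refl => exact .inl ⟨hab.symm, .refl⟩
    | @head x y hxy _ ih =>
      obtain ⟨hya, hy⟩ | h := ih
      · obtain rfl | hxa := eq_or_ne x a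
        · exact .inr ⟨hxy.2.1, y, hxy.1, hya, hxy.2.2, hy⟩
        · exact .inl ⟨hxa, .head ⟨hxy.1, ⟨hxy.2.1, hxa⟩, hxy.2.2, hya⟩ hy⟩
      · exact .inr h
  exact (hlast a h).resolve_left fun h => h.1 rfl

/-- The elements other than `u` that reach `root`, but only through `u`. -/
def blockedBy (r : α → α → Prop) (root u : α) : Set α :=
  {c | c ≠ u ∧ ReflTransGen r c root ∧ ¬ ReachesWithin r {u}ᶜ c root}

theorem ne_root_of_mem_blockedBy (hc : c ∈ blockedBy r root u) : c ≠ root := by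
  rintro rfl
  exact hc.2.2 .refl

theorem eq_or_mem_blockedBy_of_step (hc : c ∈ blockedBy r root u) (hcb : r c b)
    (hb : ReflTransGen r b root) : b = u ∨ b ∈ blockedBy r root u := by
  by_contra! h
  have hb' : ReachesWithin r {u}ᶜ b root := by
    by_contra hb'
    exact h.2 ⟨h.1, hb, hb'⟩
  exact hc.2.2 (.head ⟨hcb, hc.1, h.1⟩ hb')

theorem ReachesWithin.avoids_blocked (hc : c ∈ blockedBy r root u)
    (ha : ReachesWithin r {u}ᶜ a root) : ReachesWithin r {c}ᶜ a root := by
  induction ha using ReflTransGen.head_induction_on with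
  | refl => exact .refl
  | head hstep hrest ih =>
    refine .head ⟨hstep.1, ?_, ?_⟩ ih
    · rintro rfl
      exact hc.2.2 (.head hstep hrest)
    · rintro rfl
      exact hc.2.2 hrest

theorem reachesWithin_compl_singleton_of_mem_blockedBy (hu : ReflTransGen r u root)
    (hc : c ∈ blockedBy r root u) : ReachesWithin r {c}ᶜ u root := by
  obtain rfl | hroot := eq_or_ne u root
  · exact .refl
  obtain ⟨-, d, hud, -, -, hd⟩ := (reachesWithin_univ hu).exists_step_avoiding_start hroot
  have hd : ReachesWithin r {u}ᶜ d root := by rwa [← Set.compl_eq_univ_sdiff] at hd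
  have hdc : d ≠ c := by
    rintro rfl
    exact hc.2.2 hd
  exact .head ⟨hud, hc.1.symm, hdc⟩ (hd.avoids_blocked hc)

theorem blockedBy_ssubset (hu : ReflTransGen r u root) (hc : c ∈ blockedBy r root u) :
    blockedBy r root c ⊂ blockedBy r root u := by
  refine (Set.ssubset_iff_of_subset ?_).2 ⟨c, hc, fun h => h.1 rfl⟩
  rintro x ⟨-, hx, hxc⟩
  refine ⟨?_, hx, fun h => hxc (h.avoids_blocked hc)⟩
  rintro rfl
  exact hxc (reachesWithin_compl_singleton_of_mem_blockedBy hu hc)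

theorem mem_blockedBy_root (hc : c ≠ root) (h : ReflTransGen r c root) :
    c ∈ blockedBy r root root := by
  refine ⟨hc, h, fun h' => ?_⟩
  obtain rfl | ⟨b, -, hb⟩ := ReflTransGen.cases_tail h'
  · exact hc rfl
  · exact hb.2.2 rfl

theorem exists_blockedBy_nonempty_forall_eq_empty [Finite α] (hc : c ≠ root)
    (h : ReflTransGen r c root) :
    ∃ u, (blockedBy r root u).Nonempty ∧ ∀ w ∈ blockedBy r root u, blockedBy r root w = ∅ := by
  obtain ⟨u, ⟨hu, hne⟩, hmin⟩ := Set.exists_min_image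
    {u | ReflTransGen r u root ∧ (blockedBy r root u).Nonempty}
    (fun u => (blockedBy r root u).ncard) (Set.toFinite _) ⟨root, .refl, c, mem_blockedBy_root hc h⟩
  refine ⟨u, hne, fun w hw => ?_⟩
  by_contra hw'
  have hle := hmin w ⟨hw.2.1, Set.nonempty_iff_ne_empty.2 hw'⟩
  exact hle.not_gt (Set.ncard_lt_ncard (blockedBy_ssubset hu hw))

theorem reachesWithin_of_blockedBy_eq_empty (hu : blockedBy r root u = ∅)
    (hc : ReflTransGen r c root) (hcu : c ≠ u) : ReachesWithin r {u}ᶜ c root := by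
  by_contra h
  exact (Set.eq_empty_iff_forall_notMem.1 hu c) ⟨hcu, hc, h⟩

end Reachability

section Moves

variable {V C : Type*} {G : SimpleGraph V} {f f' : V → C} {y : V} {a b c : C} {s : ℕ}

/-- The vertex `y` can be recoloured with `c` without creating a conflict with its neighbours. -/
def Movable (G : SimpleGraph V) (f : V → C) (y : V) (c : C) : Prop :=
  ∀ w, G.Adj y w → f w ≠ c

/-- The digraph on colours in which `a → b` if some vertex of colour `a` is movable to `b`. -/
def MoveRel (G : SimpleGraph V) (f : V → C) (a b : C) : Prop :=
  ∃ y, f y = a ∧ Movable G f y b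

theorem exists_coloring_eq_update [DecidableEq V] (f : (G.deleteIncidenceSet y).Coloring C)
    (hc : Movable G f y c) : ∃ g : G.Coloring C, ⇑g = update f y c := by
  refine ⟨SimpleGraph.Coloring.mk (update f y c) fun {u v} huv => ?_, rfl⟩
  obtain rfl | hu := eq_or_ne u y
  · rw [update_self, update_of_ne huv.ne']
    exact (hc v huv).symm
  obtain rfl | hv := eq_or_ne v y
  · rw [update_self, update_of_ne hu]
    exact hc u huv.symm
  · rw [update_of_ne hu, update_of_ne hv]
    exact f.valid (G.deleteIncidenceSet_adj.2 ⟨huv, hu, hv⟩)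

theorem exists_coloring_eq_update_of_movable [DecidableEq V] (f : G.Coloring C)
    (hc : Movable G f y c) : ∃ g : G.Coloring C, ⇑g = update f y c :=
  exists_coloring_eq_update (f.comp (SimpleGraph.Hom.ofLE (G.deleteIncidenceSet_le y))) hc

/-- Every colour class has `s` vertices, except that the class of `a` lacks one vertex and the
class of `b` has one too many. For `a = b` the two corrections cancel. -/
def IsNearlyEquitable [Fintype V] [DecidableEq C] (f : V → C) (s : ℕ) (a b : C) : Prop :=
  ∀ c, #{v | f v = c} + (if c = a then 1 else 0) = s + (if c = b then 1 else 0)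

theorem card_filter_eq_add_ite [Fintype V] [DecidableEq V] [DecidableEq C] (f : V → C) (y : V)
    (c : C) : #{v | f v = c} = #{v ∈ univ.erase y | f v = c} + if c = f y then 1 else 0 := by
  rw [← insert_erase (mem_univ y), filter_insert]
  simp only [erase_insert_eq_erase, eq_comm (a := f y)]
  split_ifs
  · rw [card_insert_of_notMem (by simp)]
    simp
  · simp

theorem card_filter_update_eq [Fintype V] [DecidableEq V] [DecidableEq C] (f : V → C) (y : V)
    (c d : C) :
    #{v | update f y c v = d} + (if d = f y then 1 else 0) =
      #{v | f v = d} + (if d = c then 1 else 0) := by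
  have hrest : {v ∈ univ.erase y | update f y c v = d} = {v ∈ univ.erase y | f v = d} :=
    filter_congr fun v hv => by rw [update_of_ne (ne_of_mem_erase hv)]
  rw [card_filter_eq_add_ite (update f y c) y, card_filter_eq_add_ite f y, hrest, update_self]
  ring

theorem IsNearlyEquitable.update [Fintype V] [DecidableEq V] [DecidableEq C]
    (h : IsNearlyEquitable f s a (f y)) : IsNearlyEquitable (update f y c) s a c := by
  intro d
  have hd := h d
  have hcard := card_filter_update_eq f y c d
  lia

theorem Movable.congr (hy : Movable G f y c) (hc : ∀ v, f' v = c ↔ f v = c) :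
    Movable G f' y c :=
  fun w hw h => hy w hw ((hc w).1 h)

theorem reachesWithin_moveRel_congr {S : Set C} (hS : ∀ c ∈ S, ∀ v, f' v = c ↔ f v = c)
    (h : ReachesWithin (MoveRel G f) S b a) : ReachesWithin (MoveRel G f') S b a := by
  refine ReflTransGen.mono ?_ _ _ h
  rintro c d ⟨⟨y, hy, hd⟩, hcS, hdS⟩
  exact ⟨⟨y, (hS c hcS y).2 hy, hd.congr (hS d hdS)⟩, hcS, hdS⟩

/-- A walk that does not return to its start never moves a vertex into the class of its start, so
that class may gain vertices. -/
theorem reachesWithin_moveRel_of_gain {S : Set C}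
    (hS : ∀ c ∈ S, c ≠ b → ∀ v, f' v = c ↔ f v = c) (hb : ∀ v, f v = b → f' v = b)
    (h : ReachesWithin (MoveRel G f) S b a) : ReachesWithin (MoveRel G f') S b a := by
  obtain rfl | hba := eq_or_ne b a
  · exact .refl
  obtain ⟨hbS, c, ⟨y, hy, hc⟩, hcb, hcS, hrest⟩ := h.exists_step_avoiding_start hba
  have hrest' := reachesWithin_moveRel_congr (fun d hd => hS d hd.1 hd.2) hrest
  exact .head ⟨⟨y, hb y hy, hc.congr (hS c hcS hcb)⟩, hbS, hcS⟩
    (ReflTransGen.mono (fun _ _ h => ⟨h.1, h.2.1.1, h.2.2.1⟩) _ _ hrest')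

theorem exists_equitable_of_reachesWithin [Fintype V] [DecidableEq C] {S : Finset C}
    (f : G.Coloring C) (hf : IsNearlyEquitable f s a b)
    (h : ReachesWithin (MoveRel G f) S b a) : ∃ g : G.Coloring C, ∀ c, #{v | g v = c} = s := by
  classical
  induction S using Finset.strongInduction generalizing f b with
  | H S ih =>
  obtain rfl | hba := eq_or_ne b a
  · exact ⟨f, fun c => Nat.add_right_cancel (hf c)⟩
  obtain ⟨hbS, c, ⟨y, rfl, hc⟩, hcy, -, hrest⟩ := h.exists_step_avoiding_start hba
  obtain ⟨g, hg⟩ := exists_coloring_eq_update_of_movable f hc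
  refine ih (S.erase (f y)) (erase_ssubset hbS) g (b := c) (hg ▸ hf.update) ?_
  rw [coe_erase]
  refine reachesWithin_moveRel_of_gain (fun d hd hdc v => ?_) (fun v hv => ?_) hrest
  · obtain rfl | hv := eq_or_ne v y
    · rw [hg, update_self]
      exact iff_of_false hdc.symm fun h => hd.2 h.symm
    · rw [hg, update_of_ne hv]
  · have hvy : v ≠ y := by
      rintro rfl
      exact hcy hv.symm
    rw [hg, update_of_ne hvy, hv]

open Classical in
/-- The colours from which `root` can be reached by a sequence of moves. -/
noncomputable def accessible [Fintype C] (G : SimpleGraph V) (f : V → C) (root : C) : Finset C :=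
  {c | ReflTransGen (MoveRel G f) c root}

theorem mem_accessible [Fintype C] : c ∈ accessible G f a ↔ ReflTransGen (MoveRel G f) c a := by
  simp only [accessible, mem_filter, mem_univ, true_and]

theorem root_mem_accessible [Fintype C] : a ∈ accessible G f a :=
  mem_accessible.2 .refl

theorem exists_equitable_of_mem_accessible [Fintype V] [Fintype C] [DecidableEq C]
    (f : G.Coloring C) (hf : IsNearlyEquitable f s a b) (h : b ∈ accessible G f a) :
    ∃ g : G.Coloring C, ∀ c, #{v | g v = c} = s :=
  exists_equitable_of_reachesWithin (S := univ) f hf <| by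
    simpa only [coe_univ] using reachesWithin_univ (mem_accessible.1 h)

/-- No vertex whose colour lies outside `A` is movable to a colour in `A`. -/
def IsMoveClosed (G : SimpleGraph V) (f : V → C) (A : Finset C) : Prop :=
  ∀ y, f y ∉ A → ∀ c ∈ A, ¬ Movable G f y c

theorem isMoveClosed_accessible [Fintype C] : IsMoveClosed G f (accessible G f a) :=
  fun y hy _ hc hm => hy (mem_accessible.2 (.head ⟨y, rfl, hm⟩ (mem_accessible.1 hc)))

end Moves

section Counting

variable {V C : Type*} [Fintype V] [DecidableEq C] {G : SimpleGraph V} [DecidableRel G.Adj]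
  {f : V → C} {y : V} {a b c U W : C} {s : ℕ} {A E T : Finset C}

theorem exists_movable_of_card_lt (h : #{w ∈ G.neighborFinset y | f w ∈ E} < #E) :
    ∃ c ∈ E, Movable G f y c := by
  obtain ⟨c, hc, hc'⟩ := exists_mem_notMem_of_card_lt_card (card_image_le (f := f).trans_lt h)
  refine ⟨c, hc, fun w hw hwc => hc' (mem_image.2 ⟨w, ?_, hwc⟩)⟩
  simpa [hwc, hc] using hw

theorem card_le_card_neighborFinset_of_not_movable (h : ∀ c ∈ E, ¬ Movable G f y c) :
    #E ≤ #{w ∈ G.neighborFinset y | f w ∈ E} := by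
  by_contra! hlt
  obtain ⟨c, hc, hmov⟩ := exists_movable_of_card_lt hlt
  exact h c hc hmov

theorem card_inside_add_card_outside_eq_degree :
    #{w ∈ G.neighborFinset y | f w ∈ A} + #{w ∈ G.neighborFinset y | f w ∉ A} = G.degree y :=
  card_filter_add_card_filter_not _

theorem card_outside_lt_card_compl_add_card [Fintype C] (hdeg : G.degree y < Fintype.card C)
    (h : ∀ c ∈ A \ E, ¬ Movable G f y c) :
    #{w ∈ G.neighborFinset y | f w ∉ A} < #Aᶜ + #E := by
  have hinside : #(A \ E) ≤ #{w ∈ G.neighborFinset y | f w ∈ A} :=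
    (card_le_card_neighborFinset_of_not_movable h).trans
      (card_le_card (monotone_filter_right _ fun w _ hw => sdiff_subset hw))
  have hsplit := card_inside_add_card_outside_eq_degree (G := G) (f := f) (A := A) (y := y)
  have hA : #A ≤ #(A \ E) + #E := card_le_card_sdiff_add_card
  have hC := card_add_card_compl A
  lia

/-- `z` is the only neighbour of `y` in the colour class of `z`, so that `y` could take the
colour of `z` once `z` has left its class. -/
def IsSoloNeighbor (G : SimpleGraph V) (f : V → C) (y z : V) : Prop :=
  G.Adj y z ∧ ∀ w, G.Adj y w → f w = f z → w = z

theorem two_le_card_add_card_isSoloNeighbor [DecidableRel (IsSoloNeighbor G f)]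
    (h : ¬ Movable G f y c) :
    2 ≤ #{w ∈ G.neighborFinset y | f w = c} + #{z | IsSoloNeighbor G f y z ∧ f z = c} := by
  obtain ⟨z, hyz, rfl⟩ : ∃ z, G.Adj y z ∧ f z = c := by simpa [Movable] using h
  have hz : z ∈ ({w ∈ G.neighborFinset y | f w = f z} : Finset V) := by simpa using hyz
  by_cases hsolo : IsSoloNeighbor G f y z
  · have := card_pos.2 ⟨z, hz⟩
    have : 0 < #{x | IsSoloNeighbor G f y x ∧ f x = f z} := card_pos.2 ⟨z, by simpa using hsolo⟩
    lia
  · obtain ⟨w, hyw, hwz, hne⟩ : ∃ w, G.Adj y w ∧ f w = f z ∧ w ≠ z := by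
      simpa [IsSoloNeighbor, hyz] using hsolo
    have := one_lt_card.2 ⟨w, by simpa using ⟨hyw, hwz⟩, z, hz, hne⟩
    lia

theorem card_add_card_add_card_outside_le [DecidableRel (IsSoloNeighbor G f)] (hT : T ⊆ A)
    (h : ∀ c ∈ A, ¬ Movable G f y c) :
    #T + #A + #{w ∈ G.neighborFinset y | f w ∉ A} ≤
      G.degree y + #{z | IsSoloNeighbor G f y z ∧ f z ∈ T} := by
  have hdiff : #(A \ T) ≤ #{w ∈ G.neighborFinset y | f w ∈ A \ T} :=
    card_le_card_neighborFinset_of_not_movable fun c hc => h c (sdiff_subset hc)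
  have htwo : #T * 2 ≤ #{w ∈ G.neighborFinset y | f w ∈ T} +
      #{z | IsSoloNeighbor G f y z ∧ f z ∈ T} := by
    rw [← filter_filter, ← sum_card_fiberwise_eq_card_filter,
      ← sum_card_fiberwise_eq_card_filter, ← sum_add_distrib, ← smul_eq_mul]
    refine card_nsmul_le_sum _ _ _ fun c hc => ?_
    rw [filter_filter]
    exact two_le_card_add_card_isSoloNeighbor (h c (hT hc))
  have hsplit : #{w ∈ G.neighborFinset y | f w ∈ A \ T} +
      #{w ∈ G.neighborFinset y | f w ∈ T} = #{w ∈ G.neighborFinset y | f w ∈ A} := by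
    simp only [← sum_card_fiberwise_eq_card_filter]
    exact sum_sdiff hT
  have hA := card_sdiff_add_card_eq_card hT
  have hdeg := card_inside_add_card_outside_eq_degree (G := G) (f := f) (A := A) (y := y)
  lia

theorem IsNearlyEquitable.card_eq (hf : IsNearlyEquitable f s a b) (ha : c ≠ a) (hb : c ≠ b) :
    #{v | f v = c} = s := by
  simpa [ha, hb] using hf c

theorem IsNearlyEquitable.card_outside [Fintype C] (hf : IsNearlyEquitable f s a b) (ha : a ∈ A)
    (hb : b ∉ A) : #{v | f v ∉ A} = s * #Aᶜ + 1 := by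
  have hclass : ∀ c ∈ Aᶜ, #{v | f v = c} = s + if c = b then 1 else 0 := by
    intro c hc
    have hca : c ≠ a := by
      rintro rfl
      exact mem_compl.1 hc ha
    simpa [hca] using hf c
  calc #{v | f v ∉ A} = #{v | f v ∈ Aᶜ} := by simp only [mem_compl]
    _ = ∑ c ∈ Aᶜ, (s + if c = b then 1 else 0) := by
      rw [← sum_card_fiberwise_eq_card_filter, sum_congr rfl hclass]
    _ = s * #Aᶜ + 1 := by
      rw [sum_add_distrib, sum_ite_eq' Aᶜ b, if_pos (mem_compl.2 hb), sum_const, smul_eq_mul,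
        mul_comm]

theorem IsNearlyEquitable.exists_movable [Fintype C] (hf : IsNearlyEquitable f s a b)
    (hab : a ≠ b) (hdeg : ∀ v, G.degree v < Fintype.card C) :
    ∃ y, f y ≠ a ∧ Movable G f y a := by
  classical
  by_contra! hno
  have hcover : ({v | f v ∉ ({a} : Finset C)} : Finset V) ⊆
      ({v | f v = a} : Finset V).biUnion fun v => G.neighborFinset v := by
    intro y hy
    obtain ⟨w, hyw, hw⟩ : ∃ w, G.Adj y w ∧ f w = a := by
      simpa [Movable] using hno y (by simpa using hy)
    exact mem_biUnion.2 ⟨w, by simpa using hw, by simpa using hyw.symm⟩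
  have hle : #{v | f v ∉ ({a} : Finset C)} ≤ #{v | f v = a} * #{a}ᶜ := by
    refine (card_le_card hcover).trans (card_biUnion_le_card_mul _ _ _ fun v _ => ?_)
    rw [card_compl, card_singleton, G.card_neighborFinset_eq_degree]
    exact Nat.le_sub_one_of_lt (hdeg v)
  rw [hf.card_outside (mem_singleton_self a) (by simpa using hab.symm)] at hle
  have ha : #{v | f v = a} + 1 = s := by simpa [hab] using hf a
  rw [← ha, add_mul] at hle
  lia

theorem two_mul_card_le_of_bipartite {α β : Type*} {B : Finset α} {S D : Finset β}
    (r : α → β → Prop) [DecidableRel r] {p q : ℕ} (hS : ∀ z ∈ S, #{y ∈ B | r y z} ≤ q)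
    (hD : ∀ z ∈ D, #{y ∈ B | r y z} ≤ p)
    (hB : ∀ y ∈ B, (∃ z ∈ S, r y z) ∨ 2 ≤ #{z ∈ D | r y z}) :
    2 * #B ≤ 2 * (#S * q) + #D * p := by
  have hnear : #{y ∈ B | ∃ z ∈ S, r y z} ≤ #S * q := by
    classical
    refine (card_le_card (t := S.biUnion fun z => {y ∈ B | r y z}) fun y hy => ?_).trans
      (card_biUnion_le_card_mul _ _ _ hS)
    simp only [mem_biUnion, mem_filter] at hy ⊢
    exact hy.2.imp fun z hz => ⟨hz.1, hy.1, hz.2⟩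
  have hfar : #{y ∈ B | ¬ ∃ z ∈ S, r y z} * 2 ≤ #D * p := by
    calc #{y ∈ B | ¬ ∃ z ∈ S, r y z} * 2
        ≤ ∑ y ∈ B with ¬ ∃ z ∈ S, r y z, #{z ∈ D | r y z} := by
          rw [← smul_eq_mul]
          refine card_nsmul_le_sum _ _ _ fun y hy => ?_
          exact (hB y (mem_filter.1 hy).1).resolve_left (mem_filter.1 hy).2
      _ ≤ ∑ y ∈ B, #{z ∈ D | r y z} := sum_le_sum_of_subset (filter_subset _ _)
      _ = ∑ z ∈ D, #{y ∈ B | r y z} := sum_card_bipartiteAbove_eq_sum_card_bipartiteBelow r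
      _ ≤ #D * p := sum_le_card_nsmul _ _ _ hD
  have hsplit := card_filter_add_card_filter_not (s := B) (fun y => ∃ z ∈ S, r y z)
  lia

theorem exists_adj_or_two_le_card {P : V → Prop} [DecidablePred P] (hc : ¬ Movable G f y c)
    (hP : ∀ z, IsSoloNeighbor G f y z → P z) :
    (∃ z ∈ ({z | f z = c ∧ P z} : Finset V), G.Adj y z) ∨
      2 ≤ #{z ∈ {z | f z = c ∧ ¬ P z} | G.Adj y z} := by
  classical
  by_contra! hcon
  obtain ⟨hadj, hcard⟩ := hcon
  replace hadj : ∀ z, G.Adj y z → f z = c → ¬ P z := fun z hyz hz hPz =>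
    hadj z (by simpa using ⟨hz, hPz⟩) hyz
  have hsolo : #{z | IsSoloNeighbor G f y z ∧ f z = c} = 0 := by
    rw [card_eq_zero, filter_eq_empty_iff]
    exact fun z _ hz => hadj z hz.1.1 hz.2 (hP z hz.1)
  have hnbr : {w ∈ G.neighborFinset y | f w = c} ⊆
      {z ∈ ({z | f z = c ∧ ¬ P z} : Finset V) | G.Adj y z} := by
    intro w hw
    simp only [mem_filter, SimpleGraph.mem_neighborFinset, mem_univ, true_and] at hw ⊢
    exact ⟨⟨hw.2, hadj w hw.1 hw.2⟩, hw.1⟩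
  have htwo := two_le_card_add_card_isSoloNeighbor hc
  have hle := card_le_card hnbr
  lia

/-- Otherwise count edges between the class `W` and the vertices coloured outside `A`: a solo
neighbour in `W` has at most `#Aᶜ` of them, any other vertex of `W` at most `#Aᶜ + #T ≤ 2 * #Aᶜ`,
and an outside vertex adjacent to no solo neighbour has at least two neighbours of the second
kind. -/
theorem card_compl_lt_card_of_not_movable [Fintype C] (hdeg : ∀ v, G.degree v < Fintype.card C)
    (hA : IsMoveClosed G f A) (hT : T ⊆ A) (hUT : U ∉ T) (hW : W ∈ T)
    (hmove : ∀ z, f z = W → ∀ c ∈ A \ insert U T, ¬ Movable G f z c)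
    (hsolo : ∀ y z, f y ∉ A → f z = W → IsSoloNeighbor G f y z →
      ∀ c ∈ A \ {W}, ¬ Movable G f z c)
    (hWcard : #{v | f v = W} = s) (hB : #{v | f v ∉ A} = s * #Aᶜ + 1) : #Aᶜ < #T := by
  classical
  let P (z : V) : Prop := ∃ y, f y ∉ A ∧ IsSoloNeighbor G f y z
  have hout (z : V) : #{y ∈ {v | f v ∉ A} | G.Adj y z} =
      #{w ∈ G.neighborFinset z | f w ∉ A} := by
    congr 1
    ext w
    simp [G.adj_comm, and_comm]
  have hS : ∀ z ∈ ({z | f z = W ∧ P z} : Finset V),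
      #{y ∈ {v | f v ∉ A} | G.Adj y z} ≤ #Aᶜ := by
    intro z hz
    obtain ⟨hzW, y, hy, hyz⟩ := (mem_filter.1 hz).2
    have := card_outside_lt_card_compl_add_card (hdeg z) (hsolo y z hy hzW hyz)
    rwa [hout, ← Nat.lt_succ_iff]
  have hD : ∀ z ∈ ({z | f z = W ∧ ¬ P z} : Finset V),
      #{y ∈ {v | f v ∉ A} | G.Adj y z} ≤ #Aᶜ + #T := by
    intro z hz
    have := card_outside_lt_card_compl_add_card (hdeg z) (hmove z (mem_filter.1 hz).2.1)
    rwa [card_insert_of_notMem hUT, ← add_assoc, Nat.lt_succ_iff, ← hout] at this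
  have hcount := two_mul_card_le_of_bipartite G.Adj hS hD fun y hy => by
    have hy : f y ∉ A := (mem_filter.1 hy).2
    exact exists_adj_or_two_le_card (hA y hy W (hT hW)) fun z hz => ⟨y, hy, hz⟩
  have hsplit := card_filter_add_card_filter_not (s := ({v | f v = W} : Finset V)) P
  rw [filter_filter, filter_filter, hWcard] at hsplit
  by_contra! hle
  have := Nat.mul_le_mul_left (#{z | f z = W ∧ ¬ P z}) hle
  rw [hB, ← hsplit] at hcount
  lia

theorem sum_sum_one_div_card_le {α β : Type*} (B : Finset α) (Z : Finset β)
    (r : α → β → Prop) [DecidableRel r] :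
    ∑ y ∈ B, ∑ z ∈ Z with r y z, 1 / (#{y' ∈ B | r y' z} : ℚ) ≤ #Z := by
  calc ∑ y ∈ B, ∑ z ∈ Z with r y z, 1 / (#{y' ∈ B | r y' z} : ℚ)
      = ∑ z ∈ Z, ∑ y ∈ B with r y z, 1 / (#{y' ∈ B | r y' z} : ℚ) := by
        simp only [sum_filter]
        exact sum_comm
    _ ≤ ∑ z ∈ Z, 1 := sum_le_sum fun z _ => by
        rw [sum_const, nsmul_eq_mul, mul_one_div]
        exact div_self_le_one _
    _ = #Z := by simp

theorem div_le_sum_one_div_card_isSoloNeighbor [Fintype C] [DecidableRel (IsSoloNeighbor G f)]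
    (hdeg : G.degree y < Fintype.card C) (hA : ∀ c ∈ A, ¬ Movable G f y c) (hy : f y ∉ A)
    (hT : T ⊆ A) (hle : #Aᶜ ≤ #T)
    (hadj : ∀ z y', f z ∈ T → f y' ∉ A → IsSoloNeighbor G f y z → IsSoloNeighbor G f y' z →
      y ≠ y' → G.Adj y y') :
    (#T / #Aᶜ : ℚ) ≤ ∑ z ∈ {z | f z ∈ T} with IsSoloNeighbor G f y z,
      1 / (#{y' ∈ {v | f v ∉ A} | IsSoloNeighbor G f y' z} : ℚ) := by
  classical
  set d := #{w ∈ G.neighborFinset y | f w ∉ A} with hd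
  set Z : Finset V := {z ∈ {z | f z ∈ T} | IsSoloNeighbor G f y z} with hZ
  have hweight : ∀ z ∈ Z,
      1 / (d + 1 : ℚ) ≤ 1 / (#{y' ∈ {v | f v ∉ A} | IsSoloNeighbor G f y' z} : ℚ) := by
    intro z hz
    simp only [hZ, mem_filter, mem_univ, true_and] at hz
    have hpos : 0 < #{y' ∈ {v | f v ∉ A} | IsSoloNeighbor G f y' z} :=
      card_pos.2 ⟨y, by simpa using ⟨hy, hz.2⟩⟩
    have hcard : #{y' ∈ {v | f v ∉ A} | IsSoloNeighbor G f y' z} ≤ d + 1 := by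
      refine (card_le_card fun y' hy' => ?_).trans (card_insert_le y _)
      simp only [mem_filter, mem_univ, true_and] at hy'
      simp only [mem_insert, mem_filter, SimpleGraph.mem_neighborFinset]
      exact or_iff_not_imp_left.2 fun hne =>
        ⟨hadj z y' hz.1 hy'.1 hz.2 hy'.2 (Ne.symm hne), hy'.1⟩
    exact one_div_le_one_div_of_le (by exact_mod_cast hpos) (by exact_mod_cast hcard)
  have hsolo : #T + d + 1 ≤ #Aᶜ + #Z := by
    have := card_add_card_add_card_outside_le hT hA
    have := card_add_card_compl A
    rw [hZ, filter_filter]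
    simp only [and_comm (a := f _ ∈ T)]
    lia
  have hdlt : d + 1 ≤ #Aᶜ := by
    simpa using card_outside_lt_card_compl_add_card (E := ∅) hdeg (by simpa using hA)
  refine le_trans ?_ (card_nsmul_le_sum Z _ _ hweight)
  rw [nsmul_eq_mul, mul_one_div, div_le_div_iff₀ (by norm_cast; lia) (by positivity)]
  norm_cast
  nlinarith

/-- Otherwise the outside vertices with a common solo neighbour `z` form a clique. Giving each such
pair `(y, z)` the reciprocal of the size of that clique as its weight, every `y` receives at least
`#T / #Aᶜ`, which adds up to more than the number of vertices `z`. -/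
theorem exists_nonadjacent_isSoloNeighbor [Fintype C] (hdeg : ∀ v, G.degree v < Fintype.card C)
    (hA : IsMoveClosed G f A) (hT : T ⊆ A) (hTcard : ∀ c ∈ T, #{v | f v = c} = s)
    (hB : #{v | f v ∉ A} = s * #Aᶜ + 1) (hlt : #Aᶜ < #T) :
    ∃ z y₁ y₂, f z ∈ T ∧ f y₁ ∉ A ∧ f y₂ ∉ A ∧ IsSoloNeighbor G f y₁ z ∧
      IsSoloNeighbor G f y₂ z ∧ y₁ ≠ y₂ ∧ ¬ G.Adj y₁ y₂ := by
  classical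
  by_contra! hcon
  have hZ : #{z | f z ∈ T} = #T * s := by
    rw [← sum_card_fiberwise_eq_card_filter, sum_congr rfl hTcard, sum_const, smul_eq_mul]
  have hlow : ∀ y ∈ ({v | f v ∉ A} : Finset V), (#T / #Aᶜ : ℚ) ≤
      ∑ z ∈ {z | f z ∈ T} with IsSoloNeighbor G f y z,
        1 / (#{y' ∈ {v | f v ∉ A} | IsSoloNeighbor G f y' z} : ℚ) := by
    intro y hy
    have hy : f y ∉ A := (mem_filter.1 hy).2
    exact div_le_sum_one_div_card_isSoloNeighbor (hdeg y) (hA y hy) hy hT hlt.le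
      fun z y' hz hy' => hcon z y y' hz hy hy'
  have htotal := (card_nsmul_le_sum _ _ _ hlow).trans (sum_sum_one_div_card_le _ _ _)
  obtain ⟨y, hy⟩ : ({v | f v ∉ A} : Finset V).Nonempty := card_pos.1 (by lia)
  have hpos : 0 < #Aᶜ := card_pos.2 ⟨f y, by simpa using hy⟩
  rw [nsmul_eq_mul, mul_div_assoc', div_le_iff₀ (by exact_mod_cast hpos), hB, hZ] at htotal
  norm_cast at htotal
  nlinarith

end Counting

section Exchange

variable {V C : Type*} {G : SimpleGraph V} {f g h : V → C} {y z : V} {a b c X : C} {s : ℕ}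
  {A D : Finset C} {B : Finset V}

/-- The map that agrees with `e` on `B` and with `f` elsewhere. -/
def overwrite [DecidableEq V] (f : V → C) (e : ↥(B : Set V) → D) (v : V) : C :=
  if hv : v ∈ B then e ⟨v, hv⟩ else f v

theorem overwrite_of_mem [DecidableEq V] {v : V} {e : ↥(B : Set V) → D} (hv : v ∈ B) :
    overwrite f e v = e ⟨v, hv⟩ :=
  dif_pos hv

theorem overwrite_of_notMem [DecidableEq V] {v : V} {e : ↥(B : Set V) → D} (hv : v ∉ B) :
    overwrite f e v = f v :=
  dif_neg hv

theorem overwrite_mem [DecidableEq V] {v : V} {e : ↥(B : Set V) → D} (hv : v ∈ B) :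
    overwrite f e v ∈ D := by
  rw [overwrite_of_mem hv]
  exact (e ⟨v, hv⟩).2

theorem card_filter_overwrite [DecidableEq V] [DecidableEq C] {e : ↥(B : Set V) → D}
    (hc : c ∈ D) : #{v ∈ B | overwrite f e v = c} = #{v | e v = ⟨c, hc⟩} := by
  rw [← card_map (Embedding.subtype (· ∈ (B : Set V)))]
  congr 1
  ext v
  simp only [mem_filter, mem_map, mem_univ, true_and, Embedding.coe_subtype, Subtype.exists,
    exists_and_right, exists_eq_right, ← Subtype.coe_inj]
  exact ⟨fun ⟨hv, h⟩ => ⟨hv, by rwa [← overwrite_of_mem hv]⟩,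
    fun ⟨hv, h⟩ => ⟨hv, by rwa [overwrite_of_mem hv]⟩⟩

theorem exists_recoloring_outside [Fintype V] [DecidableEq V] [Fintype C] [DecidableEq C]
    (f : G.Coloring C) (hf : IsNearlyEquitable f s a b) (ha : a ∈ A) (hb : b ∉ A)
    (hy : f y ∉ A)
    (e : (G.induce (({v | f v ∉ A} : Finset V).erase y : Set V)).Coloring {c // c ∈ Aᶜ})
    (he : ∀ c, #{v | e v = c} = s) :
    ∃ g : (G.deleteIncidenceSet y).Coloring C,
      (∀ c ∈ A, ∀ v, g v = c ↔ f v = c) ∧ IsNearlyEquitable g s a (g y) := by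
  have mem_B (v : V) : v ∈ ({v | f v ∉ A} : Finset V).erase y ↔ v ≠ y ∧ f v ∉ A := by simp
  have hgy : overwrite f e y = f y := overwrite_of_notMem (by simp)
  have hsame : ∀ c ∈ A, ∀ v, overwrite f e v = c ↔ f v = c := by
    intro c hc v
    by_cases hv : v ∈ ({v | f v ∉ A} : Finset V).erase y
    · exact iff_of_false (fun h => mem_compl.1 (overwrite_mem hv) (h ▸ hc))
        fun h => ((mem_B v).1 hv).2 (h ▸ hc)
    · rw [overwrite_of_notMem hv]
  refine ⟨SimpleGraph.Coloring.mk (overwrite f e) fun {u v} huv => ?_, hsame, fun c => ?_⟩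
  · obtain ⟨huv, hu, hv⟩ := G.deleteIncidenceSet_adj.1 huv
    by_cases hfu : f u ∈ A
    · rw [(hsame _ hfu u).2 rfl, ne_comm, Ne, hsame _ hfu]
      exact (f.valid huv).symm
    by_cases hfv : f v ∈ A
    · rw [(hsame _ hfv v).2 rfl, Ne, hsame _ hfv]
      exact f.valid huv
    · rw [overwrite_of_mem ((mem_B u).2 ⟨hu, hfu⟩), overwrite_of_mem ((mem_B v).2 ⟨hv, hfv⟩)]
      exact fun h => e.valid (by exact huv) (Subtype.ext h)
  · change #{v | overwrite f e v = c} + _ = s + if c = overwrite f e y then 1 else 0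
    by_cases hc : c ∈ A
    · simp only [hsame c hc, hgy, hf c, ne_of_mem_of_not_mem hc hb, ne_of_mem_of_not_mem hc hy]
    · have hcls : {v ∈ univ.erase y | overwrite f e v = c} =
          {v ∈ ({v | f v ∉ A} : Finset V).erase y | overwrite f e v = c} := by
        ext v
        simp only [mem_filter, mem_B, mem_erase, mem_univ, and_true, and_congr_left_iff]
        rintro rfl
        simp only [iff_self_and]
        exact fun _ hv => hc ((hsame _ hv v).2 rfl ▸ hv)
      rw [card_filter_eq_add_ite _ y, hcls, card_filter_overwrite (mem_compl.2 hc), he,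
        if_neg (ne_of_mem_of_not_mem ha hc).symm, add_zero]

theorem exists_exchange [Fintype V] [DecidableEq V] [DecidableEq C]
    (g : (G.deleteIncidenceSet y).Coloring C) (hg : ∀ c ∈ A, ∀ v, g v = c ↔ f v = c)
    (hcard : IsNearlyEquitable g s a (g y)) (hz : f z ∈ A) (hyz : IsSoloNeighbor G f y z)
    (hXz : X ≠ f z) (hX : Movable (G.deleteIncidenceSet y) g z X) :
    ∃ h : G.Coloring C, ⇑h = update (update g z X) y (f z) ∧ IsNearlyEquitable h s a X := by
  obtain ⟨g', hg'⟩ := exists_coloring_eq_update_of_movable g hX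
  have hmov : Movable G g' y (f z) := by
    intro w hw
    rw [hg']
    obtain rfl | hwz := eq_or_ne w z
    · rwa [update_self]
    · rw [update_of_ne hwz, Ne, hg _ hz]
      exact fun h => hwz (hyz.2 w hw h)
  obtain ⟨h, hh⟩ := exists_coloring_eq_update g' hmov
  rw [hg'] at hh
  refine ⟨h, hh, ?_⟩
  have hz' : update g y (f z) z = f z := by
    rw [update_of_ne hyz.1.ne', hg _ hz]
  rw [hh, update_comm hyz.1.ne']
  exact IsNearlyEquitable.update (hz'.symm ▸ hcard.update)

theorem exchange_eq_iff [DecidableEq V] (hg : ∀ c ∈ A, ∀ v, g v = c ↔ f v = c) (hy : f y ∉ A)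
    (hc : c ∈ A) (hcz : c ≠ f z) (hcX : c ≠ X) (v : V) :
    update (update g z X) y (f z) v = c ↔ f v = c := by
  obtain rfl | hvy := eq_or_ne v y
  · rw [update_self]
    exact iff_of_false hcz.symm (ne_of_mem_of_not_mem hc hy).symm
  obtain rfl | hvz := eq_or_ne v z
  · rw [update_of_ne hvy, update_self]
    exact iff_of_false hcX.symm hcz.symm
  · rw [update_of_ne hvy, update_of_ne hvz, hg c hc]

theorem exists_equitable_of_solo_movable [Fintype V] [Fintype C] [DecidableEq C]
    (hz : f z ∈ accessible G f a) (hblock : blockedBy (MoveRel G f) a (f z) = ∅)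
    (hy : f y ∉ accessible G f a) (hyz : IsSoloNeighbor G f y z)
    (g : (G.deleteIncidenceSet y).Coloring C)
    (hg : ∀ c ∈ accessible G f a, ∀ v, g v = c ↔ f v = c)
    (hcard : IsNearlyEquitable g s a (g y)) (hX : X ∈ accessible G f a \ {f z})
    (hmov : Movable G f z X) : ∃ h : G.Coloring C, ∀ c, #{v | h v = c} = s := by
  classical
  obtain ⟨hX, hXz⟩ : X ∈ accessible G f a ∧ X ≠ f z := by simpa using hX
  have hmov' : Movable (G.deleteIncidenceSet y) g z X := fun w hw h =>
    hmov w (G.deleteIncidenceSet_le y hw) ((hg X hX w).1 h)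
  obtain ⟨h, hh, hhcard⟩ := exists_exchange g hg hcard hz hyz hXz hmov'
  refine exists_equitable_of_mem_accessible h hhcard (mem_accessible.2 ?_)
  have hreach : ReachesWithin (MoveRel G f) {c | ReflTransGen (MoveRel G f) c a ∧ c ∈ {f z}ᶜ} X a :=
    (reachesWithin_of_blockedBy_eq_empty hblock (mem_accessible.1 hX) hXz).inter_reflTransGen
  refine (reachesWithin_moveRel_of_gain (fun c hc hcX v => ?_) (fun v hv => ?_) hreach).reflTransGen
  · rw [hh, exchange_eq_iff hg hy (mem_accessible.2 hc.1) hc.2 hcX]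
  · have hvy : v ≠ y := by
      rintro rfl
      exact hy (hv ▸ hX)
    have hvz : v ≠ z := by
      rintro rfl
      exact hXz hv.symm
    rw [hh, update_of_ne hvy, update_of_ne hvz, hg X hX, hv]

theorem exists_movable_outside [Fintype V] [Fintype C] [DecidableEq C]
    [DecidableRel G.Adj] (hdeg : G.degree z < Fintype.card C)
    (hg : ∀ c ∈ A, ∀ v, g v = c ↔ f v = c) (hy : f y ∉ A) (hyz : G.Adj y z)
    (hstuck : ∀ c ∈ A \ {f z}, ¬ Movable G f z c) :
    ∃ Y ∉ A, Movable (G.deleteIncidenceSet y) g z Y := by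
  classical
  have hlt : #{w ∈ (G.deleteIncidenceSet y).neighborFinset z | g w ∈ Aᶜ} < #Aᶜ := by
    have hsub : {w ∈ (G.deleteIncidenceSet y).neighborFinset z | g w ∈ Aᶜ} ⊂
        {w ∈ G.neighborFinset z | f w ∉ A} := by
      refine (ssubset_iff_of_subset fun w hw => ?_).2 ⟨y, by simpa using ⟨hyz.symm, hy⟩, ?_⟩
      · simp only [mem_filter, SimpleGraph.mem_neighborFinset, mem_compl] at hw ⊢
        exact ⟨G.deleteIncidenceSet_le y hw.1, fun hwA => hw.2 ((hg _ hwA w).2 rfl ▸ hwA)⟩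
      · simp [SimpleGraph.deleteIncidenceSet_adj]
    exact (card_lt_card hsub).trans_le
      (Nat.lt_succ_iff.1 (card_outside_lt_card_compl_add_card hdeg hstuck))
  simpa only [mem_compl] using exists_movable_of_card_lt hlt

theorem accessible_subset_of_blockedBy_eq_empty [Fintype C] {u : C}
    (hu : blockedBy (MoveRel G f) a u = ∅)
    (hsame : ∀ c ∈ accessible G f a, c ≠ u → ∀ v, h v = c ↔ f v = c)
    (hstay : ∀ v, f v = u → ∀ c ∈ accessible G f a, c ≠ u → Movable G f v c → h v = u) :
    accessible G f a ⊆ accessible G h a := by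
  have hne (c : C) (hc : c ∈ accessible G f a) (hcu : c ≠ u) : c ∈ accessible G h a :=
    have hreach := reachesWithin_of_blockedBy_eq_empty hu (mem_accessible.1 hc) hcu
    mem_accessible.2 (reachesWithin_moveRel_congr
      (fun d hd => hsame d (mem_accessible.2 hd.1) hd.2) hreach.inter_reflTransGen).reflTransGen
  intro c hc
  obtain rfl | hcu := eq_or_ne c u
  · obtain rfl | hca := eq_or_ne c a
    · exact root_mem_accessible
    obtain ⟨-, d, ⟨v, hv, hvd⟩, hdc, -, hd⟩ :=
      (reachesWithin_univ (mem_accessible.1 hc)).exists_step_avoiding_start hca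
    have hdA := mem_accessible.2 hd.reflTransGen
    exact mem_accessible.2 (.head ⟨v, hstay v hv d hdA hdc hvd, hvd.congr (hsame d hdA hdc)⟩
      (mem_accessible.1 (hne d hdA hdc)))
  · exact hne c hc hcu

theorem accessible_ssubset_of_exchange [DecidableEq V] [Fintype C] [DecidableEq C] {y₁ y₂ : V}
    {Y : C} (hz : f z ∈ accessible G f a) (hblock : blockedBy (MoveRel G f) a (f z) = ∅)
    (hstuck : ∀ c ∈ accessible G f a \ {f z}, ¬ Movable G f z c)
    (hg : ∀ c ∈ accessible G f a, ∀ v, g v = c ↔ f v = c) (hY : Y ∉ accessible G f a)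
    (hy₁ : f y₁ ∉ accessible G f a) (hy₂ : f y₂ ∉ accessible G f a)
    (hy₂z : IsSoloNeighbor G f y₂ z) (hne : y₁ ≠ y₂) (hadj : ¬ G.Adj y₁ y₂) :
    accessible G f a ⊂ accessible G (update (update g z Y) y₁ (f z)) a := by
  have hsub : accessible G f a ⊆ accessible G (update (update g z Y) y₁ (f z)) a := by
    refine accessible_subset_of_blockedBy_eq_empty hblock
      (fun c hc hcz => exchange_eq_iff hg hy₁ hc hcz (ne_of_mem_of_not_mem hc hY))
      fun v hv c hc hcz hvc => ?_
    have hvz : v ≠ z := by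
      rintro rfl
      exact hstuck c (by simpa using ⟨hc, hcz⟩) hvc
    have hvy : v ≠ y₁ := by
      rintro rfl
      exact hy₁ (hv ▸ hz)
    rw [update_of_ne hvy, update_of_ne hvz, hg _ hz, hv]
  have hmov : Movable G (update (update g z Y) y₁ (f z)) y₂ (f z) := by
    intro w hw
    have hwy : w ≠ y₁ := by
      rintro rfl
      exact hadj hw.symm
    rw [update_of_ne hwy]
    obtain rfl | hwz := eq_or_ne w z
    · rw [update_self]
      exact (ne_of_mem_of_not_mem hz hY).symm
    · rw [update_of_ne hwz, Ne, hg _ hz]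
      exact fun h => hwz (hy₂z.2 w hw h)
  refine (ssubset_iff_of_subset hsub).2 ⟨g y₂, ?_, fun h => hy₂ ((hg _ h y₂).1 rfl ▸ h)⟩
  refine mem_accessible.2 (.head ⟨y₂, ?_, hmov⟩ (mem_accessible.1 (hsub hz)))
  rw [update_of_ne hne.symm, update_of_ne hy₂z.1.ne]

/-- `T` is a smallest nonempty set of colours that reach `a` only through one colour `U`. -/
theorem exists_terminal_colors [Fintype V] [Fintype C] [DecidableEq C] [DecidableRel G.Adj]
    (hdeg : ∀ v, G.degree v < Fintype.card C) (hf : IsNearlyEquitable f s a b) (hab : a ≠ b) :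
    ∃ T : Finset C, ∃ U ∉ T, ∃ W ∈ T,
      (∀ c ∈ T, c ∈ accessible G f a ∧ c ≠ a ∧ blockedBy (MoveRel G f) a c = ∅) ∧
      ∀ c ∈ accessible G f a \ insert U T, ¬ MoveRel G f W c := by
  classical
  obtain ⟨x, hxa, hx⟩ := hf.exists_movable hab hdeg
  obtain ⟨U, ⟨W, hW⟩, hTerm⟩ := exists_blockedBy_nonempty_forall_eq_empty hxa
    (.single ⟨x, rfl, hx⟩ : ReflTransGen (MoveRel G f) (f x) a)
  refine ⟨(blockedBy (MoveRel G f) a U).toFinset, U, fun hU => (Set.mem_toFinset.1 hU).1 rfl, W,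
    Set.mem_toFinset.2 hW, fun c hc => ?_, fun c hc hWc => ?_⟩
  · have hc := Set.mem_toFinset.1 hc
    exact ⟨mem_accessible.2 hc.2.1, ne_root_of_mem_blockedBy hc, hTerm c hc⟩
  · simp only [mem_sdiff, mem_insert, Set.mem_toFinset, mem_accessible] at hc
    exact hc.2 (eq_or_mem_blockedBy_of_step hW hWc hc.1)

theorem exists_equitable_or_accessible_ssubset [Fintype V] [Fintype C] [DecidableEq C]
    [DecidableRel G.Adj] (hdeg : ∀ v, G.degree v < Fintype.card C) (f : G.Coloring C)
    (hf : IsNearlyEquitable f s a b) (hb : b ∉ accessible G f a)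
    (hrec : ∀ y, f y ∉ accessible G f a → ∃ g : (G.deleteIncidenceSet y).Coloring C,
      (∀ c ∈ accessible G f a, ∀ v, g v = c ↔ f v = c) ∧ IsNearlyEquitable g s a (g y)) :
    (∃ h : G.Coloring C, ∀ c, #{v | h v = c} = s) ∨
      ∃ (h : G.Coloring C) (Y : C), IsNearlyEquitable h s a Y ∧
        accessible G f a ⊂ accessible G h a := by
  classical
  have hB := hf.card_outside root_mem_accessible hb
  obtain ⟨T, U, hU, W, hW, hT, hWmove⟩ :=
    exists_terminal_colors hdeg hf (ne_of_mem_of_not_mem root_mem_accessible hb)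
  have hTA : T ⊆ accessible G f a := fun c hc => (hT c hc).1
  have hTcard : ∀ c ∈ T, #{v | f v = c} = s := fun c hc =>
    hf.card_eq (hT c hc).2.1 (ne_of_mem_of_not_mem (hTA hc) hb)
  by_cases hsolo : ∃ y z, f y ∉ accessible G f a ∧ f z ∈ T ∧ IsSoloNeighbor G f y z ∧
      ∃ X ∈ accessible G f a \ {f z}, Movable G f z X
  · obtain ⟨y, z, hy, hz, hyz, X, hX, hmov⟩ := hsolo
    obtain ⟨g, hg, hgcard⟩ := hrec y hy
    exact .inl (exists_equitable_of_solo_movable (hTA hz) (hT _ hz).2.2 hy hyz g hg hgcard hX hmov)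
  push Not at hsolo
  have hlt : #(accessible G f a)ᶜ < #T :=
    card_compl_lt_card_of_not_movable hdeg isMoveClosed_accessible hTA hU hW
      (fun z hz c hc hmov => hWmove c hc ⟨z, hz, hmov⟩)
      (fun y z hy hz hyz => hz ▸ hsolo y z hy (hz ▸ hW) hyz) (hTcard W hW) hB
  obtain ⟨z, y₁, y₂, hz, hy₁, hy₂, hy₁z, hy₂z, hne, hadj⟩ :=
    exists_nonadjacent_isSoloNeighbor hdeg isMoveClosed_accessible hTA hTcard hB hlt
  obtain ⟨g, hg, hgcard⟩ := hrec y₁ hy₁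
  have hstuck := hsolo y₁ z hy₁ hz hy₁z
  obtain ⟨Y, hY, hmov⟩ := exists_movable_outside (hdeg z) hg hy₁ hy₁z.1 hstuck
  obtain ⟨h, hh, hhcard⟩ := exists_exchange g hg hgcard (hTA hz) hy₁z
    (ne_of_mem_of_not_mem (hTA hz) hY).symm hmov
  exact .inr ⟨h, Y, hhcard, hh ▸ accessible_ssubset_of_exchange (hTA hz) (hT _ hz).2.2 hstuck hg hY
    hy₁ hy₂ hy₂z hne hadj⟩

end Exchange

section HajnalSzemeredi

open Fintype (card)

theorem degree_induce_eq {V : Type*} {G : SimpleGraph V} [DecidableRel G.Adj] {X : Finset V}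
    (v : (X : Set V)) : (G.induce (X : Set V)).degree v = #{w ∈ X | G.Adj v w} := by
  classical
  rw [← SimpleGraph.card_neighborFinset_eq_degree,
    ← card_map (Embedding.subtype (· ∈ (X : Set V)))]
  congr 1
  ext w
  simp [and_comm]

variable {V C : Type*} [Fintype V] [Fintype C] [DecidableEq C] {G : SimpleGraph V} {s : ℕ}

theorem exists_equitable_of_isNearlyEquitable [DecidableRel G.Adj]
    (hdeg : ∀ v, G.degree v < card C)
    (hrec : ∀ (X : Finset V) (D : Finset C), #D < card C → #X = s * #D →
      (∀ v ∈ X, #{w ∈ X | G.Adj v w} < #D) →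
      ∃ e : (G.induce (X : Set V)).Coloring D, ∀ c, #{v | e v = c} = s)
    (f : G.Coloring C) {a b : C} (hf : IsNearlyEquitable f s a b) :
    ∃ h : G.Coloring C, ∀ c, #{v | h v = c} = s := by
  classical
  induction hk : #(accessible G f a)ᶜ using Nat.strong_induction_on generalizing f b with
  | _ k ih =>
  by_cases hb : b ∈ accessible G f a
  · exact exists_equitable_of_mem_accessible f hf hb
  have hB := hf.card_outside root_mem_accessible hb
  have hsmall : #(accessible G f a)ᶜ < card C :=
    card_lt_univ_of_notMem (by simp [root_mem_accessible] : a ∉ (accessible G f a)ᶜ)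
  have hrecolor (y : V) (hy : f y ∉ accessible G f a) :
      ∃ g : (G.deleteIncidenceSet y).Coloring C,
        (∀ c ∈ accessible G f a, ∀ v, g v = c ↔ f v = c) ∧ IsNearlyEquitable g s a (g y) := by
    have hdegB : ∀ v ∈ ({v | f v ∉ accessible G f a} : Finset V).erase y,
        #{w ∈ ({v | f v ∉ accessible G f a} : Finset V).erase y | G.Adj v w} <
          #(accessible G f a)ᶜ := by
      intro v hv
      have hvA : f v ∉ accessible G f a := by simpa using mem_of_mem_erase hv
      have hout := card_outside_lt_card_compl_add_card (E := ∅) (hdeg v) fun c hc =>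
        isMoveClosed_accessible v hvA c (mem_sdiff.1 hc).1
      refine (card_le_card fun w hw => ?_).trans_lt hout
      simp_all
    obtain ⟨e, he⟩ := hrec _ _ hsmall
      (by rw [card_erase_of_mem (by simpa using hy), hB, Nat.add_sub_cancel]) hdegB
    exact exists_recoloring_outside f hf root_mem_accessible hb hy e he
  obtain h | ⟨h, Y, hh, hlt⟩ := exists_equitable_or_accessible_ssubset hdeg f hf hb hrecolor
  · exact h
  · exact ih _ (hk ▸ card_lt_card (compl_ssubset_compl.2 hlt)) h hh rfl

theorem exists_isNearlyEquitable_of_deleteIncidenceSet [DecidableRel G.Adj] {u : V}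
    (hdeg : G.degree u < card C) (f : (G.deleteIncidenceSet u).Coloring C)
    (hf : ∀ c, #{v | f v = c} = s) :
    ∃ (g : G.Coloring C) (a b : C), IsNearlyEquitable g s a b := by
  classical
  obtain ⟨c, -, hc⟩ : ∃ c ∈ univ, Movable G f u c :=
    exists_movable_of_card_lt (by simpa using hdeg)
  obtain ⟨g, hg⟩ := exists_coloring_eq_update f hc
  exact ⟨g, f u, c, hg ▸ IsNearlyEquitable.update fun d => by rw [hf d]⟩

theorem exists_equitable_coloring_bot (hV : card V = s * card C) :
    ∃ f : (⊥ : SimpleGraph V).Coloring C, ∀ c, #{v | f v = c} = s := by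
  have e : V ≃ C × Fin s := Fintype.equivOfCardEq (by simp [hV, mul_comm])
  refine ⟨SimpleGraph.Coloring.mk (fun v => (e v).1) fun h => h.elim, fun c => ?_⟩
  calc #{v | (e v).1 = c} = #{p : C × Fin s | p.1 = c} := card_equiv e (by simp)
    _ = s := by
      rw [show ({p : C × Fin s | p.1 = c} : Finset _) = {c} ×ˢ univ by
        ext ⟨d, i⟩
        simp [eq_comm]]
      simp

/-- The **Hajnal–Szemerédi theorem**. -/
theorem exists_equitable_coloring [DecidableRel G.Adj] (hV : card V = s * card C)
    (hdeg : ∀ v, G.degree v < card C) : ∃ f : G.Coloring C, ∀ c, #{v | f v = c} = s := by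
  classical
  induction hC : card C using Nat.strong_induction_on generalizing V C with
  | _ k ihC =>
  induction hE : #G.edgeFinset using Nat.strong_induction_on generalizing G with
  | _ m ihE =>
  by_cases hbot : G = ⊥
  · exact hbot ▸ exists_equitable_coloring_bot hV
  obtain ⟨u, v, huv⟩ := SimpleGraph.ne_bot_iff_exists_adj.1 hbot
  have hlt : #(G.deleteIncidenceSet u).edgeFinset < m := by
    rw [G.card_edgeFinset_deleteIncidenceSet, ← hE]
    exact Nat.sub_lt (card_pos.2 ⟨s(u, v), by simpa using huv⟩)
      ((G.degree_pos_iff_exists_adj u).2 ⟨v, huv⟩)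
  obtain ⟨f, hf⟩ := ihE _ hlt (fun w =>
    (SimpleGraph.degree_le_of_le (G.deleteIncidenceSet_le u)).trans_lt (hdeg w)) rfl
  obtain ⟨g, a, b, hg⟩ := exists_isNearlyEquitable_of_deleteIncidenceSet (hdeg u) f hf
  refine exists_equitable_of_isNearlyEquitable hdeg (fun X D hD hX hdegX => ?_) g hg
  exact ihC #D (hC ▸ hD) (by simpa using hX)
    (fun v => by rw [degree_induce_eq, Fintype.card_coe]; exact hdegX v v.2) (by simp)

end HajnalSzemeredi

section Packing

variable {V : Type*} {G : SimpleGraph V} {r m : ℕ} {X T : Finset V} {P : Finset (Finset V)}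
  {v x : V}

/-- The family `P` consists of pairwise disjoint `r`-cliques of `G` whose union is `X`. -/
structure IsCliquePacking [DecidableEq V] (G : SimpleGraph V) (r : ℕ) (X : Finset V)
    (P : Finset (Finset V)) : Prop where
  isNClique : ∀ p ∈ P, G.IsNClique r p
  pairwiseDisjoint : (P : Set (Finset V)).PairwiseDisjoint id
  biUnion_eq : P.biUnion id = X

theorem IsCliquePacking.insert [DecidableEq V] (hP : IsCliquePacking G r (X \ T) P) (hTX : T ⊆ X)
    (hT : G.IsNClique r T) : IsCliquePacking G r X (insert T P) where
  isNClique p hp := by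
    obtain rfl | hp := mem_insert.1 hp
    · exact hT
    · exact hP.isNClique p hp
  pairwiseDisjoint := by
    rw [coe_insert]
    refine hP.pairwiseDisjoint.insert fun q hq _ => ?_
    have hqX : q ⊆ X \ T := hP.biUnion_eq ▸ subset_biUnion_of_mem id hq
    exact disjoint_sdiff.mono_right hqX
  biUnion_eq := by rw [biUnion_insert, hP.biUnion_eq, id, union_sdiff_of_subset hTX]

theorem exists_isCliquePacking_of_coloring [DecidableEq V] {C : Type*} [DecidableEq C]
    (f : (Gᶜ.induce (X : Set V)).Coloring C) (hf : ∀ c, #{v | f v = c} = r) :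
    ∃ P, IsCliquePacking G r X P := by
  let colorClass (c : C) : Finset V :=
    ({v | f v = c} : Finset (X : Set V)).map (Embedding.subtype _)
  have mem_colorClass (c : C) (v : V) : v ∈ colorClass c ↔ ∃ hv : v ∈ X, f ⟨v, hv⟩ = c := by
    simp [colorClass]
  refine ⟨univ.image fun v => colorClass (f v), fun p hp => ?_, fun p hp q hq hpq => ?_, ?_⟩
  · obtain ⟨w, -, rfl⟩ := mem_image.1 hp
    refine ⟨fun u hu v hv huv => ?_, by rw [card_map, hf]⟩
    obtain ⟨huX, huc⟩ := (mem_colorClass _ u).1 hu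
    obtain ⟨hvX, hvc⟩ := (mem_colorClass _ v).1 hv
    by_contra hnadj
    exact f.valid (v := ⟨u, huX⟩) (w := ⟨v, hvX⟩) ⟨huv, hnadj⟩ (huc.trans hvc.symm)
  · obtain ⟨c, -, rfl⟩ := mem_image.1 hp
    obtain ⟨d, -, rfl⟩ := mem_image.1 hq
    refine disjoint_left.2 fun v hvc hvd => hpq ?_
    obtain ⟨_, hc⟩ := (mem_colorClass _ v).1 hvc
    obtain ⟨_, hd⟩ := (mem_colorClass _ v).1 hvd
    rw [← hc, ← hd]
  · ext v
    simp only [SetLike.coe_sort_coe, univ_eq_attach, mem_biUnion, mem_image, mem_attach, true_and,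
      Subtype.exists, id_eq, ↓existsAndEq, mem_colorClass]
    exact ⟨fun ⟨_, _, hv, _⟩ => hv, fun hv => ⟨v, hv, hv, rfl⟩⟩

/-- The number of neighbours of `v` in `X`. -/
def degIn (G : SimpleGraph V) [DecidableRel G.Adj] (X : Finset V) (v : V) : ℕ :=
  #{w ∈ X | G.Adj v w}

variable [DecidableRel G.Adj]

theorem degIn_add_card_not_adj_eq (G : SimpleGraph V) [DecidableRel G.Adj] (X : Finset V) (v : V) :
    degIn G X v + #{w ∈ X | ¬ G.Adj v w} = #X :=
  card_filter_add_card_filter_not _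

theorem exists_isCliquePacking_of_le_degIn [DecidableEq V] (hX : #X = (r + 1) * m)
    (hdeg : ∀ v ∈ X, r * m ≤ degIn G X v) : ∃ P, IsCliquePacking G (r + 1) X P := by
  obtain ⟨f, hf⟩ : ∃ f : (Gᶜ.induce (X : Set V)).Coloring (Fin m), ∀ c, #{v | f v = c} = r + 1 := by
    refine exists_equitable_coloring (by simpa using hX) fun v => ?_
    rw [degree_induce_eq, Fintype.card_fin]
    have hsub : {w ∈ X | Gᶜ.Adj v w} ⊂ {w ∈ X | ¬ G.Adj v w} := by
      refine (ssubset_iff_of_subset (monotone_filter_right X fun w _ h => h.2)).2 ⟨v, ?_⟩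
      simp
    have hlt := card_lt_card hsub
    have hle := hdeg v v.2
    have hsum := degIn_add_card_not_adj_eq G X v
    lia
  exact exists_isCliquePacking_of_coloring f hf

theorem exists_isNClique_of_card_many_not_adj_le {N : Finset V}
    (hfew : #{y ∈ N | m < #{w ∈ N | ¬ G.Adj y w}} ≤ m) (hN : r * m < #N) :
    ∃ K ⊆ N, G.IsNClique (r + 1) K := by
  classical
  induction r generalizing N with
  | zero =>
    obtain ⟨y, hy⟩ := card_pos.1 (Nat.zero_lt_of_lt hN)
    exact ⟨{y}, by simpa using hy, by simp⟩
  | succ r ih =>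
    obtain ⟨y, hy, hyN⟩ := exists_mem_notMem_of_card_lt_card (hfew.trans_lt (by lia) : _ < #N)
    simp only [mem_filter, hy, true_and, not_lt] at hyN
    have hsum := degIn_add_card_not_adj_eq G N y
    have hfew' : #{z ∈ {w ∈ N | G.Adj y w} | m < #{w ∈ {w ∈ N | G.Adj y w} | ¬ G.Adj z w}} ≤ m := by
      refine (card_le_card fun z hz => ?_).trans hfew
      simp only [mem_filter] at hz ⊢
      exact ⟨hz.1.1, hz.2.trans_le (card_le_card (filter_subset_filter _ (filter_subset _ _)))⟩
    obtain ⟨K, hK, hclique⟩ := ih hfew' (by unfold degIn at hsum; lia)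
    exact ⟨insert y K, insert_subset hy (hK.trans (filter_subset _ _)),
      hclique.insert fun w hw => (mem_filter.1 (hK hw)).2⟩

theorem exists_isNClique_mem (hX : #X = (r + 2) * m)
    (hfew : #{v ∈ X | degIn G X v < (r + 1) * m} ≤ m) (hx : x ∈ X) (hxdeg : r * m < degIn G X x) :
    ∃ T ⊆ X, x ∈ T ∧ G.IsNClique (r + 2) T := by
  classical
  have hfew' : #{y ∈ {w ∈ X | G.Adj x w} | m < #{w ∈ {w ∈ X | G.Adj x w} | ¬ G.Adj y w}} ≤ m := by
    refine (card_le_card fun y hy => ?_).trans hfew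
    simp only [mem_filter] at hy ⊢
    have hle := card_le_card (filter_subset_filter (¬ G.Adj y ·) (filter_subset (G.Adj x ·) X))
    have hsum := degIn_add_card_not_adj_eq G X y
    exact ⟨hy.1.1, by lia⟩
  obtain ⟨K, hK, hclique⟩ := exists_isNClique_of_card_many_not_adj_le hfew' hxdeg
  exact ⟨insert x K, insert_subset hx (hK.trans (filter_subset _ _)), mem_insert_self x K,
    hclique.insert fun w hw => (mem_filter.1 (hK hw)).2⟩

theorem exists_ne_degIn_add_one_lt_card (hx : x ∈ X) (hxdeg : degIn G X x + 1 < #X) :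
    ∃ v ∈ X, v ≠ x ∧ degIn G X v + 1 < #X := by
  classical
  obtain ⟨v, hv, hvx⟩ : ∃ v ∈ ({w ∈ X | ¬ G.Adj x w} : Finset V), v ≠ x := by
    have hsum := degIn_add_card_not_adj_eq G X x
    exact exists_mem_ne (by lia) x
  rw [mem_filter] at hv
  refine ⟨v, hv.1, hvx, ?_⟩
  have hpair : ({v, x} : Finset V) ⊆ ({w ∈ X | ¬ G.Adj v w} : Finset V) := by
    simp [insert_subset_iff, hx, hv.1, G.adj_comm v x, hv.2]
  have hle := card_le_card hpair
  have hsum := degIn_add_card_not_adj_eq G X v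
  rw [card_pair hvx] at hle
  lia

theorem degIn_le_degIn_sdiff_add [DecidableEq V] (hT : #T = r + 1) (hv : ∃ w ∈ T, ¬ G.Adj v w) :
    degIn G X v ≤ degIn G (X \ T) v + r := by
  have hsub : {w ∈ X | G.Adj v w} ⊆ {w ∈ X \ T | G.Adj v w} ∪ {w ∈ T | G.Adj v w} := by
    intro w
    simp only [mem_union, mem_filter, mem_sdiff]
    tauto
  have hlt : #{w ∈ T | G.Adj v w} < r + 1 := by
    rw [← hT]
    obtain ⟨w, hw, hvw⟩ := hv
    exact card_lt_card (filter_ssubset.2 ⟨w, hw, hvw⟩)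
  have hle := (card_le_card hsub).trans (card_union_le _ _)
  unfold degIn
  lia

theorem card_degIn_lt_sdiff_le [DecidableEq V] {j k : ℕ} (hx : x ∈ X) (hxT : x ∈ T)
    (hmin : ∀ v ∈ X, degIn G X x ≤ degIn G X v)
    (hdrop : ∀ v ∈ X \ T, degIn G X v ≤ degIn G (X \ T) v + r)
    (hj : #{v ∈ X | degIn G X v < k + r} ≤ j + 1) :
    #{v ∈ X \ T | degIn G (X \ T) v < k} ≤ j := by
  have hsub : {v ∈ X \ T | degIn G (X \ T) v < k} ⊆
      ({v ∈ X | degIn G X v < k + r} : Finset V).erase x := by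
    intro v hv
    rw [mem_filter] at hv
    have hle := hdrop v hv.1
    rw [mem_sdiff] at hv
    exact mem_erase.2 ⟨(ne_of_mem_of_not_mem hxT hv.1.2).symm, mem_filter.2 ⟨hv.1.1, by lia⟩⟩
  obtain hempty | ⟨v, hv⟩ := ({v ∈ X \ T | degIn G (X \ T) v < k} : Finset V).eq_empty_or_nonempty
  · simp [hempty]
  have hvX := mem_filter.1 (mem_of_mem_erase (hsub hv))
  have hxlow : x ∈ ({v ∈ X | degIn G X v < k + r} : Finset V) :=
    mem_filter.2 ⟨hx, (hmin v hvX.1).trans_lt hvX.2⟩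
  have hle := card_le_card hsub
  rw [card_erase_of_mem hxlow] at hle
  lia

/-- The hypotheses of the theorem for the subgraph induced on `X`, with clique size `r + 2` and
`m` cliques. The conditions on the degree sequence are phrased by counting the vertices of small
degree: `dᵢ ≥ D` says that fewer than `i` vertices have degree less than `D`. -/
structure PackingCondition (G : SimpleGraph V) [DecidableRel G.Adj] (r m : ℕ) (X : Finset V) :
    Prop where
  card_eq : #X = (r + 2) * m
  card_degIn_lt : ∀ i, 1 ≤ i → i < m → #{v ∈ X | degIn G X v < r * m + i} < i
  card_degIn_lt_le : #{v ∈ X | degIn G X v < (r + 1) * m} ≤ m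
  notMem_clique : ∀ x ∈ X, degIn G X x < (r + 1) * m →
    ∀ t ⊆ X, G.IsNClique (r + 3) t → x ∉ t

theorem PackingCondition.one_lt (h : PackingCondition G r m X) (hx : x ∈ X)
    (hxdeg : degIn G X x < (r + 1) * m) : 1 < m := by
  have hm : m ≠ 0 := by
    rintro rfl
    simp at hxdeg
  by_contra hm1
  obtain rfl : m = 1 := by lia
  have hX := h.card_eq
  obtain ⟨v, hv, hvx, hvdeg⟩ := exists_ne_degIn_add_one_lt_card (G := G) hx (by lia)
  refine h.card_degIn_lt_le.not_gt (one_lt_card.2 ⟨v, ?_, x, ?_, hvx⟩)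
  · exact mem_filter.2 ⟨hv, by lia⟩
  · exact mem_filter.2 ⟨hx, hxdeg⟩

theorem PackingCondition.lt_degIn (h : PackingCondition G r m X) (hx : x ∈ X) (hm : 1 < m) :
    r * m < degIn G X x := by
  by_contra! hxdeg
  have hnone : #{v ∈ X | degIn G X v < r * m + 1} = 0 :=
    Nat.lt_one_iff.1 (h.card_degIn_lt 1 le_rfl hm)
  exact notMem_empty x (card_eq_zero.1 hnone ▸ mem_filter.2 ⟨hx, Nat.lt_succ_of_le hxdeg⟩)

theorem PackingCondition.sdiff [DecidableEq V] (h : PackingCondition G r (m + 1) X) (hTX : T ⊆ X)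
    (hT : G.IsNClique (r + 2) T) (hxT : x ∈ T) (hxdeg : degIn G X x < (r + 1) * (m + 1))
    (hmin : ∀ v ∈ X, degIn G X x ≤ degIn G X v) : PackingCondition G r m (X \ T) := by
  have hdrop : ∀ v ∈ X \ T, degIn G X v ≤ degIn G (X \ T) v + (r + 1) := by
    intro v hv
    refine degIn_le_degIn_sdiff_add hT.card_eq ?_
    by_contra! hadj
    exact h.notMem_clique x (hTX hxT) hxdeg _ (insert_subset (mem_sdiff.1 hv).1 hTX)
      (hT.insert hadj) (mem_insert_of_mem hxT)
  constructor
  · rw [card_sdiff_of_subset hTX, h.card_eq, hT.card_eq]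
    lia
  · intro i hi him
    have hlow := h.card_degIn_lt (i + 1) (by lia) (by lia)
    have hle : #{v ∈ X \ T | degIn G (X \ T) v < r * m + i} ≤ i - 1 := by
      refine card_degIn_lt_sdiff_le (hTX hxT) hxT hmin hdrop ?_
      rw [show r * m + i + (r + 1) = r * (m + 1) + (i + 1) by ring]
      lia
    lia
  · refine card_degIn_lt_sdiff_le (hTX hxT) hxT hmin hdrop ?_
    exact h.card_degIn_lt_le
  · intro v hv hvdeg t ht htclique
    have hle := hdrop v hv
    exact h.notMem_clique v (mem_sdiff.1 hv).1 (by lia) t (ht.trans sdiff_subset) htclique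

theorem PackingCondition.exists_isCliquePacking [DecidableEq V] (h : PackingCondition G r m X) :
    ∃ P, IsCliquePacking G (r + 2) X P := by
  induction m generalizing X with
  | zero => exact exists_isCliquePacking_of_le_degIn h.card_eq (by simp)
  | succ m ih =>
    by_cases hall : ∀ v ∈ X, (r + 1) * (m + 1) ≤ degIn G X v
    · exact exists_isCliquePacking_of_le_degIn h.card_eq hall
    push Not at hall
    obtain ⟨v, hv, hvdeg⟩ := hall
    obtain ⟨x, hx, hmin⟩ := exists_min_image X (degIn G X) ⟨v, hv⟩
    have hxdeg := h.lt_degIn hx (h.one_lt hv hvdeg)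
    obtain ⟨T, hTX, hxT, hT⟩ := exists_isNClique_mem h.card_eq h.card_degIn_lt_le hx hxdeg
    obtain ⟨P, hP⟩ := ih (h.sdiff hTX hT hxT ((hmin v hv).trans_lt hvdeg) hmin)
    exact ⟨insert T P, hP.insert hTX hT⟩

end Packing

section DegreeSequence

theorem deg_eq_degIn_univ {V : Type*} [Fintype V] (G : SimpleGraph V) [DecidableRel G.Adj] (v : V) :
    deg G v = degIn G univ v := by
  rw [deg, degIn, Nat.card_eq_fintype_card, SimpleGraph.card_neighborSet_eq_degree,
    ← SimpleGraph.card_neighborFinset_eq_degree, SimpleGraph.neighborFinset_eq_filter]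

theorem card_filter_lt_le_of_monotone {α : Type*} [Fintype α] {n D : ℕ} {d : Fin n → ℕ} {φ : α → ℕ}
    (σ : Fin n ≃ α) (hmono : Monotone d) (hd : ∀ i, d i = φ (σ i)) {c : Fin n} (hc : D ≤ d c) :
    #{v | φ v < D} ≤ c := by
  rw [← Fin.card_Iio c, ← card_map σ.toEmbedding]
  refine card_le_card fun v hv => mem_map_equiv.2 (mem_Iio.2 ?_)
  by_contra! hle
  have hdv := hd (σ.symm v)
  rw [σ.apply_symm_apply] at hdv
  exact (hc.trans (hdv ▸ hmono hle)).not_gt (by simpa using hv)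

end DegreeSequence

/-- Let `r ≥ 2` divide `n`, and let `G` be a graph on `n` vertices whose nondecreasing degree
sequence `d` (realised via a permutation `σ` of the vertices, 1-based: `d_i = d ⟨i-1⟩`)
satisfies `d_i ≥ (r-2)n/r + i` for all `i < n/r` and `d_{n/r+1} ≥ (r-1)n/r`. If moreover no
vertex of degree less than `(r-1)n/r` lies in a copy of `K_{r+1}`, then `G` contains a
perfect `K_r`-packing. -/
theorem stmt4 (n r : ℕ) (hr : 2 ≤ r) (hdvd : r ∣ n)
    (G : SimpleGraph (Fin n))
    (d : Fin n → ℕ) (σ : Equiv.Perm (Fin n))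
    (hmono : Monotone d) (hdeg : ∀ i, d i = deg G (σ i))
    (hcond1 : ∀ i : Fin n, (i : ℕ) + 1 < n / r → (r - 2) * (n / r) + ((i : ℕ) + 1) ≤ d i)
    (hcond2 : ∀ i : Fin n, (i : ℕ) + 1 = n / r + 1 → (r - 1) * (n / r) ≤ d i)
    (hfree : ∀ x : Fin n, deg G x < (r - 1) * (n / r) →
      ∀ t : Finset (Fin n), G.IsNClique (r + 1) t → x ∉ t) :
    HasPerfectKrPacking G r := by
  classical
  obtain ⟨q, rfl⟩ := Nat.exists_eq_add_of_le' hr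
  obtain ⟨m, rfl⟩ := hdvd
  rw [Nat.mul_div_cancel_left m (by lia)] at hcond1 hcond2 hfree
  simp only [deg_eq_degIn_univ] at hdeg hfree
  have hcount {c : Fin _} {D : ℕ} (hc : D ≤ d c) : #{v | degIn G univ v < D} ≤ c :=
    card_filter_lt_le_of_monotone σ hmono hdeg hc
  have hG : PackingCondition G q m univ :=
    { card_eq := by simp
      card_degIn_lt i hi him := by
        have hin : i - 1 < (q + 2) * m := by nlinarith [i.sub_le 1]
        have hle := hcount (hcond1 ⟨i - 1, hin⟩ (by lia))
        simp only [Nat.sub_add_cancel hi] at hle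
        exact hle.trans_lt (by lia)
      card_degIn_lt_le := by
        obtain rfl | hm := m.eq_zero_or_pos
        · simp
        · exact hcount (hcond2 ⟨m, by nlinarith⟩ rfl)
      notMem_clique x _ hx t _ := hfree x hx t }
  obtain ⟨P, hP⟩ := hG.exists_isCliquePacking
  exact ⟨P, fun p hp => ⟨(hP.isNClique p hp).card_eq, (hP.isNClique p hp).isClique⟩,
    hP.pairwiseDisjoint, by convert hP.biUnion_eq⟩
end

section
/- For every C ∈ ℕ there exists n_0 ∈ ℕ such that for every n ≥ n_0 divisible by 3 there exists a graph G on n vertices whose degree sequence d_1 ≤ ⋯ ≤ d_n satisfies d_i ≥ n/3 + C + i for all 1 ≤ i ≤ n/3, but G does not contain the square of a Hamilton cycle. -/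
/-- `G` contains the square of a Hamilton cycle: there is a cyclic ordering of all vertices
in which every vertex is adjacent to the next vertex and to the vertex after next. -/
def ContainsSquareHamCycle {n : ℕ} (G : SimpleGraph (Fin n)) : Prop :=
  ∃ f : ZMod n → Fin n, Function.Bijective f ∧
    ∀ j : ZMod n, G.Adj (f j) (f (j + 1)) ∧ G.Adj (f j) (f (j + 2))

/-! In the square of a Hamilton cycle, the two predecessors and the two successors of a vertex `v`
form a path on four vertices inside the neighbourhood of `v`. A graph with a vertex whose
neighbourhood induces a disjoint union of stars therefore contains no square of a Hamilton cycle.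

With `n = 3k`, join such a star forest on `k + C + 1` vertices (`3C + 2` centres, each with at least
`2C + 1` leaves) to the disjoint union of one further vertex, the apex, and a clique. The apex is
adjacent to the star forest only. It has degree `k + C + 1`, the `k - 2C - 1` leaves have degree
`2k - C`, and all other vertices have degree at least `2k + C`. The required bound `k + C + i` on
the `i`-th smallest degree exceeds `2k - C` only for `i > k - 2C`, past the apex and all leaves, and
is at most `2k + C` for `i ≤ k`. -/

open Set

variable {V W L K : Type*}

/-- A star forest, a graph whose components are stars: a walk with three edges cannot have both its
first and third and its second and fourth vertices distinct, which excludes exactly triangles and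
paths on four vertices. -/
def IsStarForest (F : SimpleGraph V) : Prop :=
  ∀ ⦃a b c d : V⦄, F.Adj a b → F.Adj b c → F.Adj c d → a = c ∨ b = d

lemma three_ne_zero_zmod {n : ℕ} (hn : 3 < n) : (3 : ZMod n) ≠ 0 := by
  intro h
  have hdvd : n ∣ 3 := (ZMod.natCast_eq_zero_iff 3 n).mp (mod_cast h)
  exact absurd (Nat.le_of_dvd three_pos hdvd) (by lia)

lemma not_isStarForest_induce_neighborSet_of_square {n : ℕ} (hn : 3 < n) {G : SimpleGraph V}
    {f : ZMod n → V} (hf : f.Injective)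
    (hadj : ∀ j, G.Adj (f j) (f (j + 1)) ∧ G.Adj (f j) (f (j + 2))) (j : ZMod n) :
    ¬ IsStarForest (G.induce (G.neighborSet (f j))) := by
  have adj_of_sub_eq_one {i j : ZMod n} (h : j - i = 1) : G.Adj (f i) (f j) := by
    simpa [← h] using (hadj i).1
  have adj_of_sub_eq_two {i j : ZMod n} (h : j - i = 2) : G.Adj (f i) (f j) := by
    simpa [← h] using (hadj i).2
  have ne_of_sub_eq_three {i j : ZMod n} (h : j - i = 3) : f i ≠ f j := by
    intro heq
    rw [hf heq, sub_self] at h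
    exact three_ne_zero_zmod hn h.symm
  intro hstar
  let a : G.neighborSet (f j) := ⟨f (j - 2), (adj_of_sub_eq_two (by ring)).symm⟩
  let b : G.neighborSet (f j) := ⟨f (j - 1), (adj_of_sub_eq_one (by ring)).symm⟩
  let c : G.neighborSet (f j) := ⟨f (j + 1), adj_of_sub_eq_one (by ring)⟩
  let d : G.neighborSet (f j) := ⟨f (j + 2), adj_of_sub_eq_two (by ring)⟩
  have hab : (G.induce (G.neighborSet (f j))).Adj a b := adj_of_sub_eq_one (by ring)
  have hbc : (G.induce (G.neighborSet (f j))).Adj b c := adj_of_sub_eq_two (by ring)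
  have hcd : (G.induce (G.neighborSet (f j))).Adj c d := adj_of_sub_eq_one (by ring)
  rcases hstar hab hbc hcd with hac | hbd
  · exact ne_of_sub_eq_three (by ring) (congrArg Subtype.val hac)
  · exact ne_of_sub_eq_three (by ring) (congrArg Subtype.val hbd)

lemma not_containsSquareHamCycle_comap {n : ℕ} (hn : 3 < n) {G : SimpleGraph V} {v : V}
    (hv : IsStarForest (G.induce (G.neighborSet v))) (e : Fin n ≃ V) :
    ¬ ContainsSquareHamCycle (G.comap e) := by
  rintro ⟨f, hf, hadj⟩
  obtain ⟨j, rfl⟩ := (e.bijective.comp hf).surjective v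
  exact not_isStarForest_induce_neighborSet_of_square hn (e.injective.comp hf.injective) hadj j hv

section Sorting

variable {α : Type*} [LinearOrder α] {n : ℕ}

lemma exists_equiv_fin_monotone_comp [Finite V] (hV : Nat.card V = n) (f : V → α) :
    ∃ e : Fin n ≃ V, Monotone (f ∘ e) := by
  let e := (Finite.equivFinOfCardEq hV).symm
  exact ⟨(Tuple.sort (f ∘ e)).trans e, Tuple.monotone_sort (f ∘ e)⟩

lemma le_apply_of_ncard_lt_le {f : V → α} {e : Fin n ≃ V} (he : Monotone (f ∘ e)) {x : α}
    {i : Fin n} (hx : {v | f v < x}.ncard ≤ i) : x ≤ f (e i) := by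
  by_contra! hlt
  have hcard : {v | f v < x}.ncard = (Finset.univ.filter fun j => (f ∘ e) j < x).card := by
    rw [← ncard_preimage_of_injective_subset_range e.injective (by simp), ← ncard_coe_finset]
    simp [preimage]
  exact hx.not_gt (hcard ▸ (Tuple.lt_card_lt_iff_apply_lt_of_monotone he).mpr hlt)

end Sorting

section Degree

lemma card_adj_eq_deg (G : SimpleGraph V) (v : V) : Nat.card {w // G.Adj v w} = deg G v :=
  rfl

lemma deg_comap (G : SimpleGraph W) (e : V ≃ W) (v : V) : deg (G.comap e) v = deg G (e v) :=
  Nat.card_congr ((SimpleGraph.Iso.comap e G).mapNeighborSet v)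

lemma deg_bot (v : V) : deg (⊥ : SimpleGraph V) v = 0 := by
  simp [deg]

lemma deg_top [Finite V] (v : V) : deg (⊤ : SimpleGraph V) v = Nat.card V - 1 := by
  classical
  have := Fintype.ofFinite V
  rw [deg, Nat.card_eq_fintype_card, SimpleGraph.card_neighborSet_eq_degree,
    SimpleGraph.complete_graph_degree, Nat.card_eq_fintype_card]

variable [Finite V] [Finite W]

lemma deg_eq_card_inl_add_card_inr (G : SimpleGraph (V ⊕ W)) (x : V ⊕ W) :
    deg G x = Nat.card {v // G.Adj x (.inl v)} + Nat.card {w // G.Adj x (.inr w)} := by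
  rw [← Nat.card_sum]
  exact Nat.card_congr Equiv.subtypeSum

variable (F : SimpleGraph V) (H : SimpleGraph W)

lemma deg_sum_inl (v : V) : deg (F ⊕g H) (.inl v) = deg F v := by
  rw [deg_eq_card_inl_add_card_inr]
  simp [card_adj_eq_deg]

lemma deg_sum_inr (w : W) : deg (F ⊕g H) (.inr w) = deg H w := by
  rw [deg_eq_card_inl_add_card_inr]
  simp [card_adj_eq_deg]

end Degree

/-- The join of two graphs: their disjoint union together with all edges between the two parts. -/
def graphJoin (F : SimpleGraph V) (H : SimpleGraph W) : SimpleGraph (V ⊕ W) :=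
  (F ⊕g H) ⊔ completeBipartiteGraph V W

section Join

variable {F : SimpleGraph V} {H : SimpleGraph W}

lemma isStarForest_induce_neighborSet_graphJoin (hF : IsStarForest F) {w : W}
    (hw : ∀ u, ¬ H.Adj w u) :
    IsStarForest ((graphJoin F H).induce ((graphJoin F H).neighborSet (.inr w))) := by
  have exists_eq_inl {x} (hx : (graphJoin F H).Adj (.inr w) x) : ∃ v, x = .inl v := by
    rcases x with v | u
    · exact ⟨v, rfl⟩
    · simp [graphJoin, hw] at hx
  rintro ⟨x, hx⟩ ⟨y, hy⟩ ⟨z, hz⟩ ⟨u, hu⟩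
  obtain ⟨a, rfl⟩ := exists_eq_inl hx
  obtain ⟨b, rfl⟩ := exists_eq_inl hy
  obtain ⟨c, rfl⟩ := exists_eq_inl hz
  obtain ⟨d, rfl⟩ := exists_eq_inl hu
  simpa [graphJoin, Subtype.ext_iff] using @hF a b c d

variable [Finite V] [Finite W]

lemma deg_graphJoin_inl (v : V) : deg (graphJoin F H) (.inl v) = deg F v + Nat.card W := by
  rw [deg_eq_card_inl_add_card_inr]
  simp [graphJoin, card_adj_eq_deg]

lemma deg_graphJoin_inr (w : W) : deg (graphJoin F H) (.inr w) = Nat.card V + deg H w := by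
  rw [deg_eq_card_inl_add_card_inr]
  simp [graphJoin, card_adj_eq_deg]

end Join

/-- The star forest whose centres are the elements of `K` and whose leaves are the elements of `L`,
the leaf `l` being attached to the centre `c l`. -/
def starForest (c : L → K) : SimpleGraph (L ⊕ K) where
  Adj
    | .inl l, .inr k => c l = k
    | .inr k, .inl l => c l = k
    | _, _ => False
  symm.symm := by rintro (l | k) (l' | k') <;> exact id
  loopless.irrefl := by rintro (l | k) <;> exact id

section StarForest

variable (c : L → K)

lemma isStarForest_starForest : IsStarForest (starForest c) := by
  rintro (l₁ | k₁) (l₂ | k₂) (l₃ | k₃) (l₄ | k₄) <;> grind [starForest]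

variable [Finite L] [Finite K]

lemma deg_starForest_inl (l : L) : deg (starForest c) (.inl l) = 1 := by
  rw [deg_eq_card_inl_add_card_inr]
  simp [starForest]

lemma deg_starForest_inr (k : K) : deg (starForest c) (.inr k) = Nat.card {l // c l = k} := by
  rw [deg_eq_card_inl_add_card_inr]
  simp [starForest]

end StarForest

lemma exists_forall_le_card_fiber [Finite L] [Finite K] [Nonempty K] {s : ℕ}
    (h : Nat.card K * s ≤ Nat.card L) : ∃ c : L → K, ∀ k, s ≤ Nat.card {l // c l = k} := by
  have := Fintype.ofFinite L
  have := Fintype.ofFinite K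
  obtain ⟨e⟩ : Nonempty (K × Fin s ↪ L) :=
    Function.Embedding.nonempty_of_card_le (by simpa using h)
  let c : L → K := Function.extend e Prod.fst fun _ => Classical.arbitrary K
  have hc (k : K) (i : Fin s) : c (e (k, i)) = k := e.injective.extend_apply ..
  refine ⟨c, fun k => ?_⟩
  let leaf (i : Fin s) : {l // c l = k} := ⟨e (k, i), hc k i⟩
  have hleaf : leaf.Injective := fun i j hij => by simpa [leaf] using hij
  simpa using Nat.card_le_card_of_injective leaf hleaf

/-- The join of `starForest c` with the disjoint union of a single vertex, the apex, and a clique on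
`B`. The apex is `.inr (.inl ())`, and `.inl (.inl l)` is the leaf `l`. The neighbourhood of the
apex is the star forest, which rules out squares of Hamilton cycles. -/
def apexGraph (c : L → K) (B : Type*) : SimpleGraph ((L ⊕ K) ⊕ (Unit ⊕ B)) :=
  graphJoin (starForest c) ((⊥ : SimpleGraph Unit) ⊕g (⊤ : SimpleGraph B))

section ApexGraph

variable {B : Type*}

lemma isStarForest_induce_neighborSet_apex (c : L → K) :
    IsStarForest ((apexGraph c B).induce ((apexGraph c B).neighborSet (.inr (.inl ())))) :=
  isStarForest_induce_neighborSet_graphJoin (isStarForest_starForest c) (by simp)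

variable [Finite L] [Finite K] [Finite B] (c : L → K)

lemma deg_apexGraph_leaf (l : L) :
    deg (apexGraph c B) (.inl (.inl l)) = Nat.card B + 2 := by
  simp only [apexGraph, deg_graphJoin_inl, deg_starForest_inl, Nat.card_sum, Nat.card_unique]
  lia

lemma deg_apexGraph_center (k : K) :
    deg (apexGraph c B) (.inl (.inr k)) = Nat.card {l // c l = k} + Nat.card B + 1 := by
  simp only [apexGraph, deg_graphJoin_inl, deg_starForest_inr, Nat.card_sum, Nat.card_unique]
  lia

lemma deg_apexGraph_apex :
    deg (apexGraph c B) (.inr (.inl ())) = Nat.card L + Nat.card K := by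
  simp [apexGraph, deg_graphJoin_inr, deg_sum_inl, deg_bot]

lemma deg_apexGraph_clique (b : B) :
    deg (apexGraph c B) (.inr (.inr b)) = Nat.card L + Nat.card K + (Nat.card B - 1) := by
  simp [apexGraph, deg_graphJoin_inr, deg_sum_inr, deg_top]

end ApexGraph

section DegreeSequence

variable {C t : ℕ} {c : Fin t → Fin (3 * C + 2)}

lemma le_deg_apexGraph_of_notMem_apex_leaves (ht : 2 ≤ t)
    (hc : ∀ k, 2 * C + 1 ≤ Nat.card {l // c l = k}) {v}
    (hv : v ∉ insert (.inr (.inl ())) (range fun l => .inl (.inl l))) :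
    2 * t + 5 * C + 2 ≤ deg (apexGraph c (Fin (2 * t + 3 * C))) v := by
  rcases v with (l | k) | (⟨⟩ | b)
  · simp at hv
  · rw [deg_apexGraph_center, Nat.card_fin]
    linarith [hc k]
  · simp at hv
  · simp only [deg_apexGraph_clique, Nat.card_fin]
    lia

lemma le_deg_apexGraph_of_ne_apex (ht : 2 ≤ t) (hc : ∀ k, 2 * C + 1 ≤ Nat.card {l // c l = k}) {v}
    (hv : v ≠ .inr (.inl ())) :
    2 * t + 3 * C + 2 ≤ deg (apexGraph c (Fin (2 * t + 3 * C))) v := by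
  by_cases hleaf : v ∈ range fun l => .inl (.inl l)
  · obtain ⟨l, rfl⟩ := hleaf
    rw [deg_apexGraph_leaf, Nat.card_fin]
  · have := le_deg_apexGraph_of_notMem_apex_leaves ht hc (v := v) (by grind)
    lia

lemma le_deg_apexGraph (ht : 2 ≤ t) (hc : ∀ k, 2 * C + 1 ≤ Nat.card {l // c l = k}) (v) :
    t + 3 * C + 2 ≤ deg (apexGraph c (Fin (2 * t + 3 * C))) v := by
  obtain rfl | hv := eq_or_ne v (.inr (.inl ()))
  · rw [deg_apexGraph_apex, Nat.card_fin, Nat.card_fin, add_assoc]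
  · linarith [le_deg_apexGraph_of_ne_apex ht hc hv]

lemma ncard_deg_apexGraph_lt_le (ht : 2 ≤ t) (hc : ∀ k, 2 * C + 1 ≤ Nat.card {l // c l = k})
    {i : ℕ} (hi : i ≤ t + 2 * C) :
    {v | deg (apexGraph c (Fin (2 * t + 3 * C))) v < t + 3 * C + 2 + i}.ncard ≤ i := by
  set low := {v | deg (apexGraph c (Fin (2 * t + 3 * C))) v < t + 3 * C + 2 + i}
  have hdeg {v} (hv : v ∈ low) : deg (apexGraph c (Fin (2 * t + 3 * C))) v < t + 3 * C + 2 + i := hv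
  rcases Nat.eq_zero_or_pos i with rfl | hpos
  · have hempty : low = ∅ := eq_empty_of_forall_notMem fun v hv =>
      (hdeg hv).not_ge (le_deg_apexGraph ht hc v)
    simp [hempty]
  rcases le_or_gt i t with hit | hti
  · have hsub : low ⊆ {.inr (.inl ())} := fun v hv => by
      by_contra hne
      linarith [hdeg hv, le_deg_apexGraph_of_ne_apex ht hc hne]
    calc low.ncard ≤ 1 := (ncard_le_ncard hsub).trans_eq (ncard_singleton _)
      _ ≤ i := hpos
  · have hsub : low ⊆ insert (.inr (.inl ())) (range fun l => .inl (.inl l)) := fun v hv => by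
      by_contra hnot
      linarith [hdeg hv, le_deg_apexGraph_of_notMem_apex_leaves ht hc hnot]
    calc low.ncard ≤ (range fun l : Fin t => _).ncard + 1 :=
          (ncard_le_ncard hsub).trans (ncard_insert_le _ _)
      _ ≤ t + 1 := by grw [← image_univ, ncard_image_le, ncard_univ, Nat.card_fin]
      _ ≤ i := hti

end DegreeSequence

/-- For every `C ∈ ℕ` there is `n₀` such that for every `n ≥ n₀` divisible by `3` there is a
graph `G` on `n` vertices whose nondecreasing degree sequence `d` (realised via a permutation
`σ` of the vertices, 1-based: `d_i = d ⟨i-1⟩`) satisfies `d_i ≥ n/3 + C + i` for all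
`1 ≤ i ≤ n/3`, but `G` does not contain the square of a Hamilton cycle. -/
theorem stmt13 (C : ℕ) :
    ∃ n₀ : ℕ, ∀ n : ℕ, n₀ ≤ n → 3 ∣ n →
      ∃ (G : SimpleGraph (Fin n)) (d : Fin n → ℕ) (σ : Equiv.Perm (Fin n)),
        Monotone d ∧ (∀ i, d i = deg G (σ i)) ∧
        (∀ i : Fin n, (i : ℕ) + 1 ≤ n / 3 → n / 3 + C + ((i : ℕ) + 1) ≤ d i) ∧
        ¬ ContainsSquareHamCycle G := by
  refine ⟨3 * ((3 * C + 2) * (2 * C + 1) + 2 * C + 1), ?_⟩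
  rintro n hn ⟨k, rfl⟩
  obtain ⟨t, rfl⟩ : ∃ t, k = t + 2 * C + 1 := ⟨k - (2 * C + 1), by lia⟩
  have ht : (3 * C + 2) * (2 * C + 1) ≤ t := by lia
  have ht₂ : 2 ≤ t := by nlinarith
  obtain ⟨c, hc⟩ : ∃ c : Fin t → Fin (3 * C + 2), ∀ k, 2 * C + 1 ≤ Nat.card {l // c l = k} :=
    exists_forall_le_card_fiber (by simpa using ht)
  let G := apexGraph c (Fin (2 * t + 3 * C))
  obtain ⟨e, he⟩ := exists_equiv_fin_monotone_comp (n := 3 * (t + 2 * C + 1)) (by simp; lia) (deg G)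
  refine ⟨G.comap e, deg G ∘ e, .refl _, he, fun i => (deg_comap G e i).symm, fun i hi => ?_,
    not_containsSquareHamCycle_comap (by lia) (isStarForest_induce_neighborSet_apex c) e⟩
  have hlow := ncard_deg_apexGraph_lt_le ht₂ hc (i := i) (by lia)
  have hle := le_apply_of_ncard_lt_le he hlow
  rw [Function.comp_apply]
  lia
end
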